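/- Let 0 < α ≤ 1 and p = 1. Assume Φ is a positive increasing function on (0,∞) satisfying Φ(2r) ≤ D·Φ(r) for all r > 0 with doubling constant 1 ≤ D < 2ⁿ. Then there exists a constant C > 0, independent of f, such that for every f ∈ L^{1,Φ}(ℝⁿ), ‖g_α(f)‖_{WL^{1,Φ}} ≤ C ‖f‖_{L^{1,Φ}}; that is, for every ball B(x₀,r) and every σ > 0, σ·|{x ∈ B(x₀,r) : g_α(f)(x) > σ}| ≤ C Φ(r) ‖f‖_{L^{1,Φ}}. -/

import Mathlib

/-!
Everything is reduced to a dyadic square function. For a dyadic cube `Q` of side `2 ^ k`, `coef`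
is the supremum of `|∫ ψ f|` over all mean-zero Hölder kernels `ψ` adapted to `Q` (`Ker`), and `sqf`
at `x` is the sum over `k` of the squared coefficients of the cubes containing `x`. Since `φ_t(x - ·)`
with `2 ^ k ≤ t < 2 ^ (k + 1)` is an adapted kernel, `g_α(f)(x) ^ 2 ≤ sqf f x`
(`lt_sqf_of_lt_gAlpha`). The coefficients are constant on cubes, so `sqf` is measurable and its
integral is a sum over cubes.

`L²` bound (`lintegral_sqf_le`): choose for every cube a kernel that nearly attains the supremum.
Mean zero of the finer kernel against smoothness of the coarser one gives almost orthogonality with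
geometric decay in the scale difference (`orth_le`), kernels of distant cubes do not interact
(`orth_near`), and a Schur test (`schur_finset`) finishes.

Weak type (1,1) (`weak_type`): in a Calderón–Zygmund decomposition at height `lam`, the good part is
bounded by a multiple of `lam` (Lebesgue differentiation along dyadic cubes,
`abs_le_of_notMem_CZU`) and is handled in `L²`; the bad part is a sum of atoms whose coefficients
away from their cubes decay geometrically by cancellation (`coef_far_le`), so it is handled in `L¹`
off the union of the dilated cubes (`lintegral_bad_far_le`), a set of measure `≲ ‖f‖₁ / lam`.

Morrey bound: given a ball `B(x₀, r)`, split `f` at `B(x₀, 2r)`. The local part has `L¹` norm at most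
`D Φ(r) ‖f‖`, and the weak type estimate applies to it. For the outer part and `x ∈ B(x₀, r)`, only
scales `2 ^ k ≳ r` contribute, each at most a multiple of `‖f‖ Φ(2 ^ k) / 2 ^ (k n)`; as `D < 2 ^ n`
these sum geometrically to a multiple of `‖f‖ Φ(r) / r ^ n` (`tsum_coef_outer_le`). If `σ` is below
that value, the volume of the ball suffices; otherwise the level set is due to the local part.
-/

open MeasureTheory Metric Set

noncomputable section

/-- `ℝⁿ` as a Euclidean space. -/
abbrev Rn (n : ℕ) := EuclideanSpace ℝ (Fin n)

/-- The family `𝒞_α` of real functions supported in the closed unit ball, with vanishing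
integral, satisfying the Hölder condition `|φ x - φ x'| ≤ |x - x'|^α`. -/
def Calpha (n : ℕ) (α : ℝ) : Set (Rn n → ℝ) :=
  {φ | (∀ x : Rn n, 1 < ‖x‖ → φ x = 0) ∧ ((∫ x, φ x) = 0) ∧
    ∀ x x' : Rn n, |φ x - φ x'| ≤ ‖x - x'‖ ^ α}

/-- `A_α(f)(y,t) = sup_{φ ∈ 𝒞_α} |(f * φ_t)(y)|`, where `φ_t(x) = t⁻ⁿ φ(x/t)`. -/
def Aalpha {n : ℕ} (α : ℝ) (f : Rn n → ℝ) (y : Rn n) (t : ℝ) : ℝ :=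
  ⨆ φ ∈ Calpha n α, |∫ z, (t ^ n)⁻¹ * φ (t⁻¹ • (y - z)) * f z|

/-- The intrinsic square function `S_{α,β}` of aperture `β`. -/
def Salpha {n : ℕ} (α β : ℝ) (f : Rn n → ℝ) (x : Rn n) : ℝ :=
  Real.sqrt (∫ p in {p : Rn n × ℝ | 0 < p.2 ∧ dist x p.1 < β * p.2},
    Aalpha α f p.1 p.2 ^ 2 / p.2 ^ (n + 1))

/-- The intrinsic `g^*_λ` function. -/
def gstarAlpha {n : ℕ} (α lam : ℝ) (f : Rn n → ℝ) (x : Rn n) : ℝ :=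
  Real.sqrt (∫ p in {p : Rn n × ℝ | 0 < p.2},
    (p.2 / (p.2 + dist x p.1)) ^ (lam * n) * Aalpha α f p.1 p.2 ^ 2 / p.2 ^ (n + 1))

/-- The intrinsic Littlewood–Paley `g`-function. -/
def gAlpha {n : ℕ} (α : ℝ) (f : Rn n → ℝ) (x : Rn n) : ℝ :=
  Real.sqrt (∫ t in Ioi (0 : ℝ), Aalpha α f x t ^ 2 / t)

/-- The commutator kernel
`sup_{φ ∈ 𝒞_α} |∫ (b x - b z) φ_t (y - z) f z dz|`. -/
def commAalpha {n : ℕ} (α : ℝ) (b f : Rn n → ℝ) (x y : Rn n) (t : ℝ) : ℝ :=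
  ⨆ φ ∈ Calpha n α, |∫ z, (b x - b z) * ((t ^ n)⁻¹ * φ (t⁻¹ • (y - z))) * f z|

/-- The commutator `[b, S_α]`. -/
def commS {n : ℕ} (α : ℝ) (b f : Rn n → ℝ) (x : Rn n) : ℝ :=
  Real.sqrt (∫ p in {p : Rn n × ℝ | 0 < p.2 ∧ dist x p.1 < p.2},
    commAalpha α b f x p.1 p.2 ^ 2 / p.2 ^ (n + 1))

/-- The commutator `[b, g^*_{λ,α}]`. -/
def commGstar {n : ℕ} (α lam : ℝ) (b f : Rn n → ℝ) (x : Rn n) : ℝ :=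
  Real.sqrt (∫ p in {p : Rn n × ℝ | 0 < p.2},
    (p.2 / (p.2 + dist x p.1)) ^ (lam * n) * commAalpha α b f x p.1 p.2 ^ 2 / p.2 ^ (n + 1))

/-- The commutator `[b, g_α]`. -/
def commG {n : ℕ} (α : ℝ) (b f : Rn n → ℝ) (x : Rn n) : ℝ :=
  Real.sqrt (∫ t in Ioi (0 : ℝ), commAalpha α b f x x t ^ 2 / t)

/-- `A` is an admissible constant for `f` in the generalized Morrey space `L^{p,Φ}`:
`∫_{B(x₀,r)} |f|^p ≤ A^p Φ(r)` for all balls.  The Morrey norm `‖f‖_{L^{p,Φ}}` is the least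
such `A ≥ 0`, and `f ∈ L^{p,Φ}` iff some such `A` exists. -/
def MorreyBound {n : ℕ} (p : ℝ) (Φ : ℝ → ℝ) (f : Rn n → ℝ) (A : ℝ) : Prop :=
  ∀ (x₀ : Rn n) (r : ℝ), 0 < r → (∫ x in ball x₀ r, |f x| ^ p) ≤ A ^ p * Φ r

/-- `A` is an admissible constant for `g` in the weak space `WL^{1,Φ}`:
`σ |{x ∈ B(x₀,r) : g x > σ}| ≤ A Φ(r)` for all balls and all `σ > 0`. -/
def WeakMorreyBound {n : ℕ} (Φ : ℝ → ℝ) (g : Rn n → ℝ) (A : ℝ) : Prop :=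
  ∀ (x₀ : Rn n) (r : ℝ), 0 < r → ∀ σ : ℝ, 0 < σ →
    σ * (volume {x ∈ ball x₀ r | σ < g x}).toReal ≤ A * Φ r

/-- Average of `b` over the ball `B(x₀,r)`. -/
def ballAvg {n : ℕ} (b : Rn n → ℝ) (x₀ : Rn n) (r : ℝ) : ℝ :=
  (volume (ball x₀ r)).toReal⁻¹ * ∫ y in ball x₀ r, b y

/-- `b ∈ BMO(ℝⁿ)`. -/
def IsBMO {n : ℕ} (b : Rn n → ℝ) : Prop :=
  LocallyIntegrable b volume ∧ ∃ K : ℝ, ∀ (x₀ : Rn n) (r : ℝ), 0 < r →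
    (∫ x in ball x₀ r, |b x - ballAvg b x₀ r|) ≤ K * (volume (ball x₀ r)).toReal

/-- The Hardy–Littlewood maximal function. -/
def hlMaximal {n : ℕ} (g : Rn n → ℝ) (x : Rn n) : ℝ :=
  ⨆ (x₀ : Rn n) (r : ℝ), ⨆ (_ : 0 < r ∧ x ∈ ball x₀ r),
    (volume (ball x₀ r)).toReal⁻¹ * ∫ y in ball x₀ r, |g y|

open scoped ENNReal

/-! ### Dyadic cubes -/

/-- The integer label of the dyadic cube of side `2 ^ k` that contains `x`. -/
def idx {n : ℕ} (k : ℤ) (x : Rn n) : Fin n → ℤ := fun i => ⌊x i / (2 : ℝ) ^ k⌋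

/-- The half-open dyadic cube of side `2 ^ k` with label `m`. -/
def cube {n : ℕ} (k : ℤ) (m : Fin n → ℤ) : Set (Rn n) := {x | idx k x = m}

/-- The lower corner `2 ^ k • m` of the dyadic cube `cube k m`. -/
def corner {n : ℕ} (k : ℤ) (m : Fin n → ℤ) : Rn n :=
  WithLp.toLp 2 (fun i => (2 : ℝ) ^ k * (m i : ℝ))

lemma q_pos (k : ℤ) : (0 : ℝ) < (2 : ℝ) ^ k := by positivity

lemma measurable_idx {n : ℕ} (k : ℤ) : Measurable (idx k : Rn n → Fin n → ℤ) := by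
  unfold idx
  refine measurable_pi_lambda _ (fun i => ?_)
  refine Int.measurable_floor.comp ?_
  fun_prop

lemma measurableSet_cube {n : ℕ} (k : ℤ) (m : Fin n → ℤ) : MeasurableSet (cube k m) :=
  measurable_idx k (measurableSet_singleton m)

lemma cube_disjoint {n : ℕ} (k : ℤ) {m m' : Fin n → ℤ} (h : m ≠ m') :
    Disjoint (cube k m) (cube k m') := by
  rw [Set.disjoint_left]
  intro x hx hx'
  exact h (hx.symm.trans hx')

lemma idx_succ {n : ℕ} {k : ℤ} {x y : Rn n} (h : idx k x = idx k y) :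
    idx (k + 1) x = idx (k + 1) y := by
  funext i
  have hi := congrFun h i
  simp only [idx] at hi ⊢
  have e : ∀ a : ℝ, a / (2 : ℝ) ^ (k + 1) = (a / 2 ^ k) / ((2 : ℕ) : ℝ) := by
    intro a
    rw [zpow_add_one₀ (by norm_num)]
    push_cast
    rw [div_div]
  rw [e, e, Int.floor_div_natCast, Int.floor_div_natCast, hi]

lemma idx_mono {n : ℕ} {k l : ℤ} (hkl : k ≤ l) {x y : Rn n} (h : idx k x = idx k y) :
    idx l x = idx l y := by
  induction l, hkl using Int.leInduction with
  | base => exact h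
  | succ l _ ih => exact idx_succ ih

lemma volume_cube {n : ℕ} (k : ℤ) (m : Fin n → ℤ) :
    volume (cube k m) = ENNReal.ofReal (((2 : ℝ) ^ k) ^ n) := by
  have h : cube k m = WithLp.ofLp ⁻¹' (Set.univ.pi fun i =>
      Set.Ico ((2 : ℝ) ^ k * (m i : ℝ)) ((2 : ℝ) ^ k * ((m i : ℝ) + 1))) := by
    ext x
    simp only [cube, idx, Set.mem_ofPred_eq, Set.mem_preimage, Set.mem_univ_pi, Set.mem_Ico,
      funext_iff]
    refine forall_congr' (fun i => ?_)
    rw [Int.floor_eq_iff, le_div_iff₀ (q_pos k), div_lt_iff₀ (q_pos k), mul_comm _ ((2 : ℝ) ^ k),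
      mul_comm _ ((2 : ℝ) ^ k)]
  rw [h, (PiLp.volume_preserving_ofLp (Fin n)).measure_preimage, Real.volume_pi_Ico]
  · have : ∀ i, (2 : ℝ) ^ k * ((m i : ℝ) + 1) - (2 : ℝ) ^ k * (m i : ℝ) = 2 ^ k := by
      intro i; ring
    simp only [this, Finset.prod_const, Finset.card_univ, Fintype.card_fin]
    rw [ENNReal.ofReal_pow (q_pos k).le]
  · exact (MeasurableSet.univ_pi fun i => measurableSet_Ico).nullMeasurableSet

lemma volume_real_cube {n : ℕ} (k : ℤ) (m : Fin n → ℤ) :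
    volume.real (cube k m) = ((2 : ℝ) ^ k) ^ n := by
  rw [measureReal_def, volume_cube, ENNReal.toReal_ofReal (by positivity)]

lemma dist_corner {n : ℕ} (k : ℤ) (x : Rn n) :
    dist x (corner k (idx k x)) ≤ n * (2 : ℝ) ^ k := by
  rw [EuclideanSpace.dist_eq]
  have hq := q_pos k
  have h1 : ∀ i, dist (x i) (corner k (idx k x) i) ^ 2 ≤ ((2 : ℝ) ^ k) ^ 2 := by
    intro i
    have e : corner k (idx k x) i = (2 : ℝ) ^ k * (⌊x i / (2 : ℝ) ^ k⌋ : ℝ) := rfl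
    have e2 : x i - corner k (idx k x) i = (2 : ℝ) ^ k * Int.fract (x i / (2 : ℝ) ^ k) := by
      rw [e, Int.fract]; field_simp
    rw [Real.dist_eq, e2, abs_of_nonneg (mul_nonneg hq.le (Int.fract_nonneg _))]
    have := Int.fract_lt_one (x i / (2 : ℝ) ^ k)
    have h0 := Int.fract_nonneg (x i / (2 : ℝ) ^ k)
    gcongr
    nlinarith
  refine Real.sqrt_le_iff.2 ⟨by positivity, ?_⟩
  calc ∑ i, dist (x i) (corner k (idx k x) i) ^ 2 ≤ ∑ _i : Fin n, ((2 : ℝ) ^ k) ^ 2 :=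
        Finset.sum_le_sum (fun i _ => h1 i)
    _ = n * ((2 : ℝ) ^ k) ^ 2 := by simp
    _ ≤ (n * (2 : ℝ) ^ k) ^ 2 := by
        rw [mul_pow]
        gcongr
        rcases Nat.eq_zero_or_pos n with h | h
        · simp [h]
        · have : (1 : ℝ) ≤ n := by exact_mod_cast h
          nlinarith

lemma dist_corner' {n : ℕ} {k : ℤ} {m : Fin n → ℤ} {x : Rn n} (hx : x ∈ cube k m) :
    dist x (corner k m) ≤ n * (2 : ℝ) ^ k := by
  have : idx k x = m := hx
  rw [← this]
  exact dist_corner k x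

lemma volume_real_closedBall {n : ℕ} (x : Rn n) {r : ℝ} (hr : 0 ≤ r) :
    volume.real (closedBall x r) = r ^ n * volume.real (ball (0 : Rn n) 1) := by
  rw [measureReal_def, Measure.addHaar_closedBall _ _ hr, ENNReal.toReal_mul,
    ENNReal.toReal_ofReal (by positivity), finrank_euclideanSpace_fin, measureReal_def]

/-! ### The discretized intrinsic square function -/

/-- Normalized kernels adapted to the cube `cube k m`: functions supported near the cube, with
vanishing integral, and with size and Hölder modulus scaled to side length `2 ^ k`.  Every
`φ_t(x - ·)` with `φ ∈ Calpha n α`, `2 ^ k ≤ t < 2 ^ (k + 1)` and `x ∈ cube k m` is one of them. -/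
def Ker {n : ℕ} (α : ℝ) (k : ℤ) (m : Fin n → ℤ) : Set (Rn n → ℝ) :=
  {ψ | (∀ z, (n + 2) * (2 : ℝ) ^ k < dist z (corner k m) → ψ z = 0) ∧ (∫ z, ψ z) = 0 ∧
    (∀ z z', |ψ z - ψ z'| ≤ (((2 : ℝ) ^ k) ^ n)⁻¹ * (‖z - z'‖ / (2 : ℝ) ^ k) ^ α) ∧
    ∀ z, |ψ z| ≤ 3 * (((2 : ℝ) ^ k) ^ n)⁻¹}

/-- The intrinsic coefficient of `f` at a dyadic cube: the supremum of `|∫ ψ f|` over the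
kernels `ψ` adapted to the cube. -/
def coef {n : ℕ} (α : ℝ) (f : Rn n → ℝ) (k : ℤ) (m : Fin n → ℤ) : ℝ≥0∞ :=
  ⨆ ψ ∈ Ker α k m, ‖∫ z, ψ z * f z‖ₑ

/-- The square of the dyadic intrinsic square function, `∑ₖ (coefficient at the cube of side
`2 ^ k` containing `x`)²`. -/
def sqf {n : ℕ} (α : ℝ) (f : Rn n → ℝ) (x : Rn n) : ℝ≥0∞ :=
  ∑' k : ℤ, (coef α f k (idx k x)) ^ 2

section Ker
variable {n : ℕ} {α : ℝ} {k : ℤ} {m : Fin n → ℤ} {ψ : Rn n → ℝ}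

lemma zero_mem_Ker : (fun _ => 0 : Rn n → ℝ) ∈ Ker α k m := by
  refine ⟨fun _ _ => rfl, by simp, fun z z' => ?_, fun z => ?_⟩
  · simp only [sub_self, abs_zero]; positivity
  · simp only [abs_zero]; positivity

lemma Ker.continuous (hα : 0 < α) (h : ψ ∈ Ker α k m) : Continuous ψ := by
  rw [continuous_iff_continuousAt]
  intro x
  rw [ContinuousAt, tendsto_iff_dist_tendsto_zero]
  have h3 : Filter.Tendsto
      (fun z => (((2 : ℝ) ^ k) ^ n)⁻¹ * (‖z - x‖ / (2 : ℝ) ^ k) ^ α) (nhds x) (nhds 0) := by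
    have : Continuous (fun z => (((2 : ℝ) ^ k) ^ n)⁻¹ * (‖z - x‖ / (2 : ℝ) ^ k) ^ α) := by
      refine continuous_const.mul ?_
      refine Continuous.rpow_const (by fun_prop) (fun _ => Or.inr hα.le)
    have h := this.tendsto x
    simpa [Real.zero_rpow hα.ne'] using h
  exact squeeze_zero (fun _ => dist_nonneg) (fun z => by rw [Real.dist_eq]; exact h.2.2.1 z x) h3

lemma Ker.hasCompactSupport (h : ψ ∈ Ker α k m) : HasCompactSupport ψ := by
  refine HasCompactSupport.intro (isCompact_closedBall (corner k m) ((n + 2) * (2 : ℝ) ^ k)) ?_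
  intro x hx
  exact h.1 x (by simpa using hx)

lemma Ker.integrable_mul (hα : 0 < α) (h : ψ ∈ Ker α k m) {f : Rn n → ℝ}
    (hf : LocallyIntegrable f volume) : Integrable (fun z => ψ z * f z) := by
  simpa using hf.integrable_smul_left_of_hasCompactSupport (Ker.continuous hα h)
    (Ker.hasCompactSupport h)

end Ker

lemma coef_add_le {n : ℕ} {α : ℝ} (hα : 0 < α) {f g : Rn n → ℝ}
    (hf : LocallyIntegrable f volume) (hg : LocallyIntegrable g volume) (k : ℤ) (m : Fin n → ℤ) :
    coef α (f + g) k m ≤ coef α f k m + coef α g k m := by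
  refine iSup₂_le (fun ψ hψ => ?_)
  have : ∫ z, ψ z * (f + g) z = (∫ z, ψ z * f z) + ∫ z, ψ z * g z := by
    rw [← integral_add (Ker.integrable_mul hα hψ hf) (Ker.integrable_mul hα hψ hg)]
    simp [mul_add]
  rw [this]
  refine (enorm_add_le _ _).trans (add_le_add ?_ ?_)
  · exact le_iSup₂ (f := fun ψ (_ : ψ ∈ Ker α k m) => ‖∫ z, ψ z * f z‖ₑ) ψ hψ
  · exact le_iSup₂ (f := fun ψ (_ : ψ ∈ Ker α k m) => ‖∫ z, ψ z * g z‖ₑ) ψ hψ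

/-- Subadditivity of the dyadic square function in the quasi-norm form `(a + b)² ≤ 2 a² + 2 b²`, used to
split `f` into a good and a bad part, and into a local and an outer part. -/
lemma sqf_add_le {n : ℕ} {α : ℝ} (hα : 0 < α) {f g : Rn n → ℝ}
    (hf : LocallyIntegrable f volume) (hg : LocallyIntegrable g volume) (x : Rn n) :
    sqf α (f + g) x ≤ 2 * sqf α f x + 2 * sqf α g x := by
  unfold sqf
  rw [← ENNReal.tsum_mul_left, ← ENNReal.tsum_mul_left, ← ENNReal.tsum_add]
  refine ENNReal.tsum_le_tsum (fun k => ?_)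
  refine (pow_le_pow_left₀ zero_le (coef_add_le hα hf hg k (idx k x)) 2).trans ?_
  have := ENNReal.rpow_add_le_mul_rpow_add_rpow (coef α f k (idx k x)) (coef α g k (idx k x))
    (p := 2) (by norm_num)
  norm_num at this
  rw [← mul_add]
  exact_mod_cast this

/-- `ℓ¹` dominates `ℓ²`. -/
lemma sqf_le_tsum_sq {n : ℕ} (α : ℝ) (f : Rn n → ℝ) (x : Rn n) :
    sqf α f x ≤ (∑' k : ℤ, coef α f k (idx k x)) ^ 2 := by
  unfold sqf
  rw [sq (∑' k : ℤ, coef α f k (idx k x)), ← ENNReal.tsum_mul_right]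
  refine ENNReal.tsum_le_tsum (fun k => ?_)
  rw [sq]
  gcongr
  exact ENNReal.le_tsum k

/-! ### The continuous square function is dominated by the dyadic one -/

/-- Functions in `Calpha n α` are bounded by `3`: any point of the unit ball is at distance `3`
from a point off the ball. -/
lemma Calpha_abs_le {n : ℕ} (hn : 0 < n) {α : ℝ} (hα1 : α ≤ 1) {φ : Rn n → ℝ}
    (h : φ ∈ Calpha n α) (x : Rn n) : |φ x| ≤ 3 := by
  by_cases hx : 1 < ‖x‖
  · rw [h.1 x hx]; norm_num
  push Not at hx
  have : Nonempty (Fin n) := ⟨⟨0, hn⟩⟩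
  have : Nontrivial (Rn n) := inferInstance
  obtain ⟨v, hv⟩ := exists_norm_eq (Rn n) (show (0 : ℝ) ≤ 3 by norm_num)
  have h0 : φ (x + v) = 0 := by
    apply h.1
    have := norm_sub_norm_le v (-x)
    rw [norm_neg, sub_neg_eq_add, add_comm v x] at this
    linarith
  have := h.2.2 x (x + v)
  rw [h0, sub_zero] at this
  refine this.trans ?_
  have e : ‖x - (x + v)‖ = 3 := by simp [hv]
  rw [e]
  calc (3 : ℝ) ^ α ≤ 3 ^ (1 : ℝ) := Real.rpow_le_rpow_of_exponent_le (by norm_num) hα1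
    _ = 3 := by simp

/-- A translated dilate `φ_t(x - ·)` at scale `t ∈ [2 ^ k, 2 ^ (k + 1))` is a kernel adapted to the
dyadic cube of side `2 ^ k` around `x`. -/
lemma Calpha_scale_mem_Ker {n : ℕ} (hn : 0 < n) {α : ℝ} (hα0 : 0 < α) (hα1 : α ≤ 1)
    {φ : Rn n → ℝ} (h : φ ∈ Calpha n α) {k : ℤ} {t : ℝ} (ht1 : (2 : ℝ) ^ k ≤ t)
    (ht2 : t < (2 : ℝ) ^ (k + 1)) (x : Rn n) :
    (fun z => (t ^ n)⁻¹ * φ (t⁻¹ • (x - z))) ∈ Ker α k (idx k x) := by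
  have hq := q_pos k
  have ht : 0 < t := hq.trans_le ht1
  have hinv : (t ^ n)⁻¹ ≤ (((2 : ℝ) ^ k) ^ n)⁻¹ := by gcongr
  refine ⟨fun z hz => ?_, ?_, fun z z' => ?_, fun z => ?_⟩
  · beta_reduce
    rw [h.1, mul_zero]
    rw [norm_smul, norm_inv, Real.norm_of_nonneg ht.le, ← dist_eq_norm, dist_comm]
    rw [lt_inv_mul_iff₀ ht, mul_one]
    have h1 := dist_triangle z x (corner k (idx k x))
    have h2 := dist_corner k x
    rw [zpow_add_one₀ (by norm_num)] at ht2
    nlinarith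
  · rw [integral_const_mul, integral_sub_left_eq_self (fun z => φ (t⁻¹ • z)) volume x,
      Measure.integral_comp_inv_smul, h.2.1]
    simp
  · beta_reduce
    rw [← mul_sub, abs_mul, abs_of_nonneg (by positivity : 0 ≤ (t ^ n)⁻¹)]
    refine mul_le_mul hinv ((h.2.2 _ _).trans ?_) (abs_nonneg _) (by positivity)
    refine Real.rpow_le_rpow (norm_nonneg _) ?_ hα0.le
    rw [← smul_sub, norm_smul, norm_inv, Real.norm_of_nonneg ht.le, sub_sub_sub_cancel_left,
      norm_sub_rev, inv_mul_eq_div]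
    gcongr
  · beta_reduce
    rw [abs_mul, abs_of_nonneg (by positivity : 0 ≤ (t ^ n)⁻¹), mul_comm (3 : ℝ)]
    exact mul_le_mul hinv (Calpha_abs_le hn hα1 h _) (abs_nonneg _) (by positivity)

/-- `A_α(f)(x, t)` is controlled by a quantity constant on the cube and on the dyadic range of `t`. -/
lemma ofReal_Aalpha_le {n : ℕ} (hn : 0 < n) {α : ℝ} (hα0 : 0 < α) (hα1 : α ≤ 1)
    (f : Rn n → ℝ) {k : ℤ} {t : ℝ} (ht1 : (2 : ℝ) ^ k ≤ t)
    (ht2 : t < (2 : ℝ) ^ (k + 1)) (x : Rn n) :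
    ENNReal.ofReal (Aalpha α f x t) ≤ coef α f k (idx k x) := by
  by_cases hc : coef α f k (idx k x) = ∞
  · rw [hc]; exact le_top
  refine ENNReal.ofReal_le_of_le_toReal ?_
  refine Real.iSup_le (fun φ => Real.iSup_le (fun hφ => ?_) ENNReal.toReal_nonneg)
    ENNReal.toReal_nonneg
  have h1 := Calpha_scale_mem_Ker hn hα0 hα1 hφ ht1 ht2 x
  have h2 := le_iSup₂ (f := fun ψ (_ : ψ ∈ Ker α k (idx k x)) => ‖∫ z, ψ z * f z‖ₑ) _ h1
  have h3 := ENNReal.toReal_mono hc h2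
  simpa using h3

lemma Aalpha_nonneg {n : ℕ} (α : ℝ) (f : Rn n → ℝ) (x : Rn n) (t : ℝ) : 0 ≤ Aalpha α f x t :=
  Real.iSup_nonneg (fun _ => Real.iSup_nonneg (fun _ => abs_nonneg _))

lemma Ioi_subset_iUnion_Ico :
    Ioi (0 : ℝ) ⊆ ⋃ k : ℤ, Ico ((2 : ℝ) ^ k) ((2 : ℝ) ^ (k + 1)) := by
  intro t ht
  obtain ⟨k, hk⟩ := exists_mem_Ico_zpow (y := (2 : ℝ)) (show 0 < t from ht) (by norm_num)
  exact mem_iUnion.2 ⟨k, hk⟩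

lemma lintegral_Aalpha_le {n : ℕ} (hn : 0 < n) {α : ℝ} (hα0 : 0 < α) (hα1 : α ≤ 1)
    (f : Rn n → ℝ) (x : Rn n) :
    ∫⁻ t in Ioi (0 : ℝ), ENNReal.ofReal (Aalpha α f x t ^ 2 / t) ≤ sqf α f x := by
  refine (lintegral_mono_set Ioi_subset_iUnion_Ico).trans ?_
  refine (lintegral_iUnion_le _ _).trans ?_
  refine ENNReal.tsum_le_tsum (fun k => ?_)
  have hq := q_pos k
  calc ∫⁻ t in Ico ((2 : ℝ) ^ k) ((2 : ℝ) ^ (k + 1)), ENNReal.ofReal (Aalpha α f x t ^ 2 / t)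
      ≤ ∫⁻ _t in Ico ((2 : ℝ) ^ k) ((2 : ℝ) ^ (k + 1)),
          coef α f k (idx k x) ^ 2 * ENNReal.ofReal (((2 : ℝ) ^ k)⁻¹) := by
        refine setLIntegral_mono' measurableSet_Ico (fun t ht => ?_)
        have ht0 : 0 < t := hq.trans_le ht.1
        rw [div_eq_mul_inv, ENNReal.ofReal_mul (sq_nonneg _),
          ENNReal.ofReal_pow (Aalpha_nonneg _ _ _ _)]
        have := ht.1
        gcongr
        exact ofReal_Aalpha_le hn hα0 hα1 f ht.1 ht.2 x
    _ = coef α f k (idx k x) ^ 2 := by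
        rw [setLIntegral_const, Real.volume_Ico, mul_assoc, ← ENNReal.ofReal_mul (by positivity)]
        have : ((2 : ℝ) ^ k)⁻¹ * ((2 : ℝ) ^ (k + 1) - 2 ^ k) = 1 := by
          rw [zpow_add_one₀ (by norm_num)]; field_simp; norm_num
        rw [this]; simp

/-- The pointwise comparison `g_α(f)² ≤ sqf`, in the form used for level sets.  If the defining
Bochner integral of `g_α(f)(x)` diverges its value is the junk `0`, which is harmless here. -/
lemma lt_sqf_of_lt_gAlpha {n : ℕ} (hn : 0 < n) {α : ℝ} (hα0 : 0 < α) (hα1 : α ≤ 1)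
    (f : Rn n → ℝ) (x : Rn n) {σ : ℝ} (hσ : 0 < σ) (h : σ < gAlpha α f x) :
    ENNReal.ofReal (σ ^ 2) < sqf α f x := by
  have h1 : σ ^ 2 < ∫ t in Ioi (0 : ℝ), Aalpha α f x t ^ 2 / t := (Real.lt_sqrt hσ.le).1 h
  have hint : Integrable (fun t => Aalpha α f x t ^ 2 / t) (volume.restrict (Ioi (0 : ℝ))) := by
    by_contra hc
    rw [integral_undef hc] at h1
    nlinarith
  refine lt_of_lt_of_le ?_ (lintegral_Aalpha_le hn hα0 hα1 f x)
  rw [← ofReal_integral_eq_lintegral_ofReal hint]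
  · exact (ENNReal.ofReal_lt_ofReal_iff ((sq_nonneg σ).trans_lt h1)).2 h1
  · filter_upwards [ae_restrict_mem measurableSet_Ioi] with t ht
    exact div_nonneg (sq_nonneg _) (le_of_lt ht)

/-! ### Geometric sums over scales -/

lemma summable_geom_natAbs {ρ : ℝ} (h0 : 0 ≤ ρ) (h1 : ρ < 1) :
    Summable (fun d : ℤ => ρ ^ d.natAbs) := by
  refine Summable.of_nat_of_neg ?_ ?_
  · simpa using summable_geometric_of_lt_one h0 h1
  · simpa using summable_geometric_of_lt_one h0 h1

/-- The two-sided geometric sum `∑_{d ∈ ℤ} ρ ^ |d|`. -/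
def gsum (ρ : ℝ) : ℝ := ∑' d : ℤ, ρ ^ d.natAbs

lemma gsum_nonneg {ρ : ℝ} (h0 : 0 ≤ ρ) : 0 ≤ gsum ρ := tsum_nonneg (fun _ => by positivity)

lemma summable_geom_shift {ρ : ℝ} (h0 : 0 ≤ ρ) (h1 : ρ < 1) (k : ℤ) :
    Summable (fun l : ℤ => ρ ^ (l - k).natAbs) := by
  have := (Equiv.subRight k).summable_iff (f := fun d : ℤ => ρ ^ d.natAbs)
  exact this.2 (summable_geom_natAbs h0 h1)

lemma tsum_geom_shift (ρ : ℝ) (k : ℤ) : ∑' l : ℤ, ρ ^ (l - k).natAbs = gsum ρ :=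
  (Equiv.subRight k).tsum_eq (fun d : ℤ => ρ ^ d.natAbs)

lemma sum_geom_shift_le {ρ : ℝ} (h0 : 0 ≤ ρ) (h1 : ρ < 1) (k : ℤ) (I : Finset ℤ) :
    ∑ l ∈ I, ρ ^ (l - k).natAbs ≤ gsum ρ := by
  rw [← tsum_geom_shift ρ k]
  exact (summable_geom_shift h0 h1 k).sum_le_tsum I (fun _ _ => by positivity)

lemma tsum_ofReal_geom {ρ c : ℝ} (h0 : 0 ≤ ρ) (h1 : ρ < 1) (hc : 0 ≤ c) (k : ℤ) :
    ∑' l : ℤ, ENNReal.ofReal (c * ρ ^ (l - k).natAbs) = ENNReal.ofReal (c * gsum ρ) := by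
  rw [← ENNReal.ofReal_tsum_of_nonneg (fun _ => by positivity)
    ((summable_geom_shift h0 h1 k).mul_left c), tsum_mul_left, tsum_geom_shift]

/-- The decay rate `2 ^ (-α)` between consecutive scales. -/
def theta (α : ℝ) : ℝ := (1 / 2 : ℝ) ^ α

lemma theta_nonneg (α : ℝ) : 0 ≤ theta α := by unfold theta; positivity

lemma theta_lt_one {α : ℝ} (hα : 0 < α) : theta α < 1 :=
  Real.rpow_lt_one (by norm_num) (by norm_num) hα

lemma ratio_rpow (α : ℝ) {k l : ℤ} (h : k ≤ l) :
    ((2 : ℝ) ^ k / 2 ^ l) ^ α = theta α ^ (l - k).natAbs := by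
  obtain ⟨d, rfl⟩ := Int.le.dest h
  rw [add_sub_cancel_left, Int.natAbs_natCast, zpow_add₀ (by norm_num), theta,
    ← Real.rpow_natCast, ← Real.rpow_mul (by norm_num), mul_comm α, Real.rpow_mul (by norm_num),
    Real.rpow_natCast]
  congr 1
  rw [zpow_natCast, one_div, inv_pow]
  field_simp

/-- Scaled Hölder modulus at a point within distance `C 2 ^ k`, seen at the larger scale `2 ^ l`. -/
lemma holder_ratio_le {α : ℝ} (hα0 : 0 < α) (hα1 : α ≤ 1) {k l : ℤ} (h : k ≤ l) {d C : ℝ}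
    (hd0 : 0 ≤ d) (hC : 1 ≤ C) (hd : d ≤ C * 2 ^ k) :
    (d / (2 : ℝ) ^ l) ^ α ≤ C * theta α ^ (l - k).natAbs := by
  have hk := q_pos k
  have hl := q_pos l
  calc (d / (2 : ℝ) ^ l) ^ α ≤ (C * ((2 : ℝ) ^ k / 2 ^ l)) ^ α := by
        refine Real.rpow_le_rpow (by positivity) ?_ hα0.le
        rw [← mul_div_assoc]; gcongr
    _ = C ^ α * theta α ^ (l - k).natAbs := by
        rw [Real.mul_rpow (by positivity) (by positivity), ratio_rpow α h]
    _ ≤ C * theta α ^ (l - k).natAbs := by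
        refine mul_le_mul_of_nonneg_right ?_ (pow_nonneg (theta_nonneg α) _)
        calc C ^ α ≤ C ^ (1 : ℝ) := Real.rpow_le_rpow_of_exponent_le hC hα1
          _ = C := Real.rpow_one C

/-! ### Almost orthogonality and the `L²` bound -/

/-- The volume of the unit ball. -/
def vol1 (n : ℕ) : ℝ := volume.real (ball (0 : Rn n) 1)

lemma vol1_nonneg (n : ℕ) : 0 ≤ vol1 n := measureReal_nonneg

lemma abs_integral_le_of_ball {n : ℕ} {F : Rn n → ℝ} {c : Rn n} {r K : ℝ} (hr : 0 ≤ r)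
    (h0 : ∀ z, r < dist z c → F z = 0) (hK : ∀ z, dist z c ≤ r → |F z| ≤ K) :
    |∫ z, F z| ≤ K * (r ^ n * vol1 n) := by
  have h1 : ∫ z in closedBall c r, F z = ∫ z, F z :=
    setIntegral_eq_integral_of_forall_compl_eq_zero (fun z hz => h0 z (by simpa using hz))
  have h2 := norm_setIntegral_le_of_norm_le_const (μ := volume) (s := closedBall c r) (f := F)
    (C := K) measure_closedBall_lt_top (fun z hz => hK z (by simpa using hz))
  rw [h1, volume_real_closedBall _ hr] at h2
  exact h2

/-- The constant in the almost-orthogonality estimate. -/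
def orthC (n : ℕ) : ℝ := 3 * ((n + 2) * ((n + 2) ^ n * vol1 n))

lemma orthC_nonneg (n : ℕ) : 0 ≤ orthC n := by
  have := vol1_nonneg n
  unfold orthC; positivity

/-- Almost orthogonality: the pairing of kernels at scales `2 ^ k ≤ 2 ^ l` decays like
`2 ^ (-α (l - k))`. -/
lemma orth_le {n : ℕ} {α : ℝ} (hα0 : 0 < α) (hα1 : α ≤ 1) {k l : ℤ} (hkl : k ≤ l)
    {m m' : Fin n → ℤ} {ψ ψ' : Rn n → ℝ} (h : ψ ∈ Ker α k m) (h' : ψ' ∈ Ker α l m') :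
    |∫ z, ψ z * ψ' z| ≤ orthC n * theta α ^ (l - k).natAbs * (((2 : ℝ) ^ l) ^ n)⁻¹ := by
  have hk := q_pos k
  have hl := q_pos l
  set c := corner k m
  -- The mean zero of the small-scale kernel is played against the smoothness of the other one.
  have e : ∫ z, ψ z * ψ' z = ∫ z, ψ z * (ψ' z - ψ' c) := by
    have i1 : Integrable (fun z => ψ z * ψ' z) :=
      Ker.integrable_mul hα0 h (Ker.continuous hα0 h').locallyIntegrable
    have i2 : Integrable (fun z => ψ z * ψ' c) :=
      Ker.integrable_mul hα0 h (continuous_const (y := ψ' c)).locallyIntegrable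
    simp only [mul_sub]
    rw [integral_sub i1 i2, integral_mul_const, h.2.1]
    simp
  rw [e]
  refine (abs_integral_le_of_ball (c := c) (r := (n + 2) * (2 : ℝ) ^ k)
    (K := 3 * (((2 : ℝ) ^ k) ^ n)⁻¹ * ((((2 : ℝ) ^ l) ^ n)⁻¹ *
      ((n + 2) * theta α ^ (l - k).natAbs))) (by positivity)
    (fun z hz => by rw [h.1 z hz, zero_mul]) (fun z hz => ?_)).trans (le_of_eq ?_)
  · rw [abs_mul]
    refine mul_le_mul (h.2.2.2 z) ((h'.2.2.1 z c).trans ?_) (abs_nonneg _) (by positivity)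
    refine mul_le_mul_of_nonneg_left ?_ (by positivity)
    refine holder_ratio_le hα0 hα1 hkl (norm_nonneg _) ?_ (by rwa [← dist_eq_norm])
    have : (0 : ℝ) ≤ n := by positivity
    linarith
  · unfold orthC
    rw [mul_pow]
    field_simp

lemma orth_le_max {n : ℕ} {α : ℝ} (hα0 : 0 < α) (hα1 : α ≤ 1) {k l : ℤ}
    {m m' : Fin n → ℤ} {ψ ψ' : Rn n → ℝ} (h : ψ ∈ Ker α k m) (h' : ψ' ∈ Ker α l m') :
    |∫ z, ψ z * ψ' z| ≤
      orthC n * theta α ^ (l - k).natAbs * ((max ((2 : ℝ) ^ k) (2 ^ l)) ^ n)⁻¹ := by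
  rcases le_total k l with hkl | hkl
  · rw [max_eq_right (zpow_le_zpow_right₀ (by norm_num) hkl)]
    exact orth_le hα0 hα1 hkl h h'
  · rw [max_eq_left (zpow_le_zpow_right₀ (by norm_num) hkl)]
    have := orth_le hα0 hα1 hkl h' h
    rw [← Int.natAbs_neg, neg_sub] at this
    simpa only [mul_comm (ψ' _)] using this

/-- Kernels have a nonzero pairing only if their cubes are within a multiple of the larger side. -/
lemma orth_near {n : ℕ} {α : ℝ} {k l : ℤ}
    {m m' : Fin n → ℤ} {ψ ψ' : Rn n → ℝ} (h : ψ ∈ Ker α k m) (h' : ψ' ∈ Ker α l m')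
    (hne : ∫ z, ψ z * ψ' z ≠ 0) :
    dist (corner l m') (corner k m) ≤ (2 * n + 4) * max ((2 : ℝ) ^ k) (2 ^ l) := by
  by_contra hc
  push Not at hc
  apply hne
  have : ∀ z, ψ z * ψ' z = 0 := by
    intro z
    by_cases h1 : (n + 2) * (2 : ℝ) ^ k < dist z (corner k m)
    · rw [h.1 z h1, zero_mul]
    · rw [h'.1 z, mul_zero]
      push Not at h1
      have h2 := dist_triangle_left (corner l m') (corner k m) z
      have h3 := le_max_left ((2 : ℝ) ^ k) (2 ^ l)
      have h4 := le_max_right ((2 : ℝ) ^ k) (2 ^ l)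
      have : (0 : ℝ) ≤ n := by positivity
      nlinarith
  simp [this]

/-- The Schur row-sum constant. -/
def schurC (n : ℕ) (α : ℝ) : ℝ := orthC n * ((3 * n + 4) ^ n * vol1 n) * gsum (theta α)

lemma schurC_nonneg (n : ℕ) (α : ℝ) : 0 ≤ schurC n α := by
  have := vol1_nonneg n
  have := orthC_nonneg n
  have := gsum_nonneg (theta_nonneg α)
  unfold schurC; positivity

/-- Row sum at a single scale: the cubes `R` of side `2 ^ l` that interact with a given cube are
disjoint and fill at most a ball of radius comparable with the larger scale. -/
lemma schur_scale {n : ℕ} {α : ℝ} (hα0 : 0 < α) (hα1 : α ≤ 1)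
    {ψ : ℤ × (Fin n → ℤ) → Rn n → ℝ} (hψ : ∀ Q, ψ Q ∈ Ker α Q.1 Q.2)
    (Q : ℤ × (Fin n → ℤ)) (l : ℤ) (J : Finset (Fin n → ℤ)) :
    ∑ m' ∈ J, ((2 : ℝ) ^ l) ^ n * |∫ z, ψ Q z * ψ (l, m') z| ≤
      orthC n * ((3 * n + 4) ^ n * vol1 n) * theta α ^ (l - Q.1).natAbs := by
  classical
  set X := max ((2 : ℝ) ^ Q.1) (2 ^ l) with hX
  have hXl : (2 : ℝ) ^ l ≤ X := le_max_right _ _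
  have hXpos : 0 < X := (q_pos l).trans_le hXl
  have hB := orthC_nonneg n
  have hθ := theta_nonneg α
  set J' := J.filter (fun m' => ∫ z, ψ Q z * ψ (l, m') z ≠ 0) with hJ'
  have e1 : ∑ m' ∈ J, ((2 : ℝ) ^ l) ^ n * |∫ z, ψ Q z * ψ (l, m') z|
      = ∑ m' ∈ J', ((2 : ℝ) ^ l) ^ n * |∫ z, ψ Q z * ψ (l, m') z| := by
    rw [hJ', Finset.sum_filter]
    refine Finset.sum_congr rfl (fun m' _ => ?_)
    split_ifs with h
    · rfl
    · push Not at h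
      rw [h]; simp
  have hvol : ∑ _m' ∈ J', ((2 : ℝ) ^ l) ^ n ≤ ((3 * n + 4) * X) ^ n * vol1 n := by
    have e2 : ∑ m' ∈ J', ((2 : ℝ) ^ l) ^ n = volume.real (⋃ m' ∈ J', cube l m') := by
      rw [measureReal_biUnion_finset (h := fun b _ => by
        rw [volume_cube]; exact ENNReal.ofReal_ne_top)]
      · exact Finset.sum_congr rfl (fun m' _ => (volume_real_cube l m').symm)
      · intro a _ b _ hab
        exact cube_disjoint l hab
      · exact fun b _ => measurableSet_cube l b
    rw [e2, vol1, ← volume_real_closedBall (corner Q.1 Q.2) (by positivity)]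
    refine measureReal_mono ?_ measure_closedBall_lt_top.ne
    refine iUnion₂_subset (fun m' hm' x hx => ?_)
    have h1 := orth_near (hψ Q) (hψ (l, m')) (Finset.mem_filter.1 hm').2
    have h2 := dist_corner' hx
    have h3 := dist_triangle x (corner l m') (corner Q.1 Q.2)
    have h4 : (n : ℝ) * 2 ^ l ≤ n * X := by gcongr
    rw [mem_closedBall]
    simp only at h1
    rw [← hX] at h1
    linarith
  rw [e1]
  calc ∑ m' ∈ J', ((2 : ℝ) ^ l) ^ n * |∫ z, ψ Q z * ψ (l, m') z|
      ≤ ∑ m' ∈ J', ((2 : ℝ) ^ l) ^ n * (orthC n * theta α ^ (l - Q.1).natAbs * (X ^ n)⁻¹) :=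
        Finset.sum_le_sum (fun m' _ => mul_le_mul_of_nonneg_left
          (orth_le_max hα0 hα1 (hψ Q) (hψ (l, m'))) (by positivity))
    _ = (∑ _m' ∈ J', ((2 : ℝ) ^ l) ^ n) * (orthC n * theta α ^ (l - Q.1).natAbs * (X ^ n)⁻¹) := by
        rw [Finset.sum_mul]
    _ ≤ (((3 * n + 4) * X) ^ n * vol1 n) *
          (orthC n * theta α ^ (l - Q.1).natAbs * (X ^ n)⁻¹) := by
        refine mul_le_mul_of_nonneg_right hvol (by positivity)
    _ = orthC n * ((3 * n + 4) ^ n * vol1 n) * theta α ^ (l - Q.1).natAbs := by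
        rw [mul_pow]; field_simp

/-- The row sums of the Gram matrix of the kernels, weighted by the volumes of the cubes, are
bounded uniformly in the row: the single-scale bounds form a geometric series. -/
lemma schur_row {n : ℕ} {α : ℝ} (hα0 : 0 < α) (hα1 : α ≤ 1)
    {ψ : ℤ × (Fin n → ℤ) → Rn n → ℝ} (hψ : ∀ Q, ψ Q ∈ Ker α Q.1 Q.2)
    (Q : ℤ × (Fin n → ℤ)) (F : Finset (ℤ × (Fin n → ℤ))) :
    ∑ R ∈ F, ((2 : ℝ) ^ R.1) ^ n * |∫ z, ψ Q z * ψ R z| ≤ schurC n α := by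
  classical
  have hB := orthC_nonneg n
  have hV := vol1_nonneg n
  calc ∑ R ∈ F, ((2 : ℝ) ^ R.1) ^ n * |∫ z, ψ Q z * ψ R z|
      ≤ ∑ R ∈ F.image Prod.fst ×ˢ F.image Prod.snd,
          ((2 : ℝ) ^ R.1) ^ n * |∫ z, ψ Q z * ψ R z| := by
        refine Finset.sum_le_sum_of_subset_of_nonneg Finset.subset_product
          (fun _ _ _ => by positivity)
    _ = ∑ l ∈ F.image Prod.fst, ∑ m' ∈ F.image Prod.snd,
          ((2 : ℝ) ^ l) ^ n * |∫ z, ψ Q z * ψ (l, m') z| := Finset.sum_product _ _ _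
    _ ≤ ∑ l ∈ F.image Prod.fst,
          orthC n * ((3 * n + 4) ^ n * vol1 n) * theta α ^ (l - Q.1).natAbs :=
        Finset.sum_le_sum (fun l _ => schur_scale hα0 hα1 hψ Q l _)
    _ ≤ schurC n α := by
        rw [← Finset.mul_sum, schurC]
        exact mul_le_mul_of_nonneg_left
          (sum_geom_shift_le (theta_nonneg α) (theta_lt_one hα0) _ _) (by positivity)

/-- A finite Schur test for a symmetric matrix with weights `w`. -/
lemma schur_finset {ι : Type*} (F : Finset ι) (w c : ι → ℝ) (E : ι → ι → ℝ) {K : ℝ}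
    (hw : ∀ i, 0 ≤ w i) (hE : ∀ i j, E i j = E j i) (hrow : ∀ i, ∑ j ∈ F, w j * |E i j| ≤ K) :
    ∑ i ∈ F, ∑ j ∈ F, (w i * c i) * (w j * c j) * E i j ≤ K * ∑ i ∈ F, w i * c i ^ 2 := by
  have h1 : ∀ i j, (w i * c i) * (w j * c j) * E i j ≤
      (w i * c i ^ 2 * (w j * |E i j|) + w j * c j ^ 2 * (w i * |E j i|)) / 2 := by
    intro i j
    rw [hE j i]
    have h2 : c i * c j * E i j ≤ (c i ^ 2 + c j ^ 2) / 2 * |E i j| := by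
      have h3 : |c i * c j| ≤ (c i ^ 2 + c j ^ 2) / 2 := by
        rw [abs_le]
        constructor <;> nlinarith [sq_nonneg (c i + c j), sq_nonneg (c i - c j)]
      calc c i * c j * E i j ≤ |c i * c j * E i j| := le_abs_self _
        _ = |c i * c j| * |E i j| := abs_mul _ _
        _ ≤ _ := mul_le_mul_of_nonneg_right h3 (abs_nonneg _)
    have := mul_le_mul_of_nonneg_left h2 (mul_nonneg (hw i) (hw j))
    linarith
  have h4 : ∑ i ∈ F, ∑ j ∈ F, w i * c i ^ 2 * (w j * |E i j|) ≤ K * ∑ i ∈ F, w i * c i ^ 2 := by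
    rw [Finset.mul_sum]
    refine Finset.sum_le_sum (fun i _ => ?_)
    rw [← Finset.mul_sum, mul_comm K]
    exact mul_le_mul_of_nonneg_left (hrow i) (mul_nonneg (hw i) (sq_nonneg _))
  calc ∑ i ∈ F, ∑ j ∈ F, (w i * c i) * (w j * c j) * E i j
      ≤ ∑ i ∈ F, ∑ j ∈ F,
        (w i * c i ^ 2 * (w j * |E i j|) + w j * c j ^ 2 * (w i * |E j i|)) / 2 :=
        Finset.sum_le_sum (fun i _ => Finset.sum_le_sum (fun j _ => h1 i j))
    _ = (∑ i ∈ F, ∑ j ∈ F, w i * c i ^ 2 * (w j * |E i j|) +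
          ∑ i ∈ F, ∑ j ∈ F, w j * c j ^ 2 * (w i * |E j i|)) / 2 := by
        simp only [← Finset.sum_div, Finset.sum_add_distrib]
    _ = ∑ i ∈ F, ∑ j ∈ F, w i * c i ^ 2 * (w j * |E i j|) := by
        rw [Finset.sum_comm (f := fun i j => w j * c j ^ 2 * (w i * |E j i|))]; ring
    _ ≤ _ := h4

/-- The `L²` bound for an arbitrary choice of one adapted kernel per cube. -/
lemma l2_finset {n : ℕ} {α : ℝ} (hα0 : 0 < α) (hα1 : α ≤ 1)
    {ψ : ℤ × (Fin n → ℤ) → Rn n → ℝ} (hψ : ∀ Q, ψ Q ∈ Ker α Q.1 Q.2)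
    {f : Rn n → ℝ} (hf : Integrable f) (hf2 : Integrable (fun z => f z ^ 2))
    (F : Finset (ℤ × (Fin n → ℤ))) :
    ∑ Q ∈ F, ((2 : ℝ) ^ Q.1) ^ n * (∫ z, ψ Q z * f z) ^ 2 ≤ schurC n α * ∫ z, f z ^ 2 := by
  set w : ℤ × (Fin n → ℤ) → ℝ := fun Q => ((2 : ℝ) ^ Q.1) ^ n with hw
  set c : ℤ × (Fin n → ℤ) → ℝ := fun Q => ∫ z, ψ Q z * f z with hc
  set S := ∑ Q ∈ F, w Q * c Q ^ 2 with hS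
  set K := schurC n α with hK
  have hK0 : 0 ≤ K := schurC_nonneg n α
  set g : Rn n → ℝ := fun z => ∑ Q ∈ F, (w Q * c Q) * ψ Q z with hg
  have hψf : ∀ Q, Integrable (fun z => ψ Q z * f z) :=
    fun Q => Ker.integrable_mul hα0 (hψ Q) hf.locallyIntegrable
  have hψψ : ∀ Q R, Integrable (fun z => ψ Q z * ψ R z) :=
    fun Q R => Ker.integrable_mul hα0 (hψ Q) (Ker.continuous hα0 (hψ R)).locallyIntegrable
  have egf : ∀ z, g z * f z = ∑ Q ∈ F, (w Q * c Q) * (ψ Q z * f z) := by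
    intro z; simp only [hg, Finset.sum_mul, mul_assoc]
  have igf : Integrable (fun z => g z * f z) := by
    simp only [egf]
    exact integrable_finsetSum _ (fun Q _ => (hψf Q).const_mul _)
  have hSgf : ∫ z, g z * f z = S := by
    simp only [egf]
    rw [integral_finsetSum _ (fun Q _ => (hψf Q).const_mul _), hS]
    refine Finset.sum_congr rfl (fun Q _ => ?_)
    rw [integral_const_mul]
    change w Q * c Q * c Q = _
    ring
  have egg : ∀ z, g z ^ 2 = ∑ Q ∈ F, ∑ R ∈ F, ((w Q * c Q) * (w R * c R)) * (ψ Q z * ψ R z) := by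
    intro z
    rw [sq, hg, Finset.sum_mul_sum]
    refine Finset.sum_congr rfl (fun Q _ => Finset.sum_congr rfl (fun R _ => by ring))
  have igg : Integrable (fun z => g z ^ 2) := by
    simp only [egg]
    exact integrable_finsetSum _ (fun Q _ => integrable_finsetSum _
      (fun R _ => (hψψ Q R).const_mul _))
  have hgg : ∫ z, g z ^ 2 ≤ K * S := by
    simp only [egg]
    rw [integral_finsetSum _ (fun Q _ => integrable_finsetSum _
      (fun R _ => (hψψ Q R).const_mul _))]
    have : ∀ Q ∈ F, ∫ z, ∑ R ∈ F, ((w Q * c Q) * (w R * c R)) * (ψ Q z * ψ R z) =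
        ∑ R ∈ F, ((w Q * c Q) * (w R * c R)) * ∫ z, ψ Q z * ψ R z := by
      intro Q _
      rw [integral_finsetSum _ (fun R _ => (hψψ Q R).const_mul _)]
      simp only [integral_const_mul]
    rw [Finset.sum_congr rfl this]
    refine schur_finset F w c (fun Q R => ∫ z, ψ Q z * ψ R z) (fun Q => by positivity)
      (fun Q R => by simp only [mul_comm]) (fun Q => schur_row hα0 hα1 hψ Q F)
  -- `0 ≤ ∫ (K f - g)² ≤ K² ∫ f² - 2 K S + K S`.
  have h0 : 0 ≤ ∫ z, (K * f z - g z) ^ 2 := integral_nonneg (fun z => sq_nonneg _)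
  have h1 : ∫ z, (K * f z - g z) ^ 2 = K ^ 2 * (∫ z, f z ^ 2) - 2 * K * S + ∫ z, g z ^ 2 := by
    have e : ∀ z, (K * f z - g z) ^ 2 = K ^ 2 * f z ^ 2 - 2 * K * (g z * f z) + g z ^ 2 := by
      intro z; ring
    simp only [e]
    have i1 : Integrable (fun z => K ^ 2 * f z ^ 2) := hf2.const_mul _
    have i2 : Integrable (fun z => 2 * K * (g z * f z)) := igf.const_mul _
    have i3 : Integrable (fun z => K ^ 2 * f z ^ 2 - 2 * K * (g z * f z)) := i1.sub i2
    rw [integral_add i3 igg, integral_sub i1 i2, integral_const_mul, integral_const_mul, hSgf]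
  rcases hK0.eq_or_lt with hK1 | hK1
  · -- If `K = 0` then `g = 0` almost everywhere, hence `S = ∫ g f = 0`.
    have h2 : ∫ z, g z ^ 2 = 0 :=
      le_antisymm (hgg.trans (by rw [← hK1]; simp)) (integral_nonneg (fun z => sq_nonneg _))
    have h3 := (integral_eq_zero_iff_of_nonneg (fun z => sq_nonneg (g z)) igg).1 h2
    have h4 : S = 0 := by
      rw [← hSgf]
      refine integral_eq_zero_of_ae ?_
      filter_upwards [h3] with z hz
      have : g z = 0 := by simpa using hz
      simp [this]
    rw [h4, ← hK1]; simp
  · rw [h1] at h0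
    nlinarith

lemma coef_lt_top {n : ℕ} {α : ℝ} {f : Rn n → ℝ} (hf : Integrable f) (k : ℤ) (m : Fin n → ℤ) :
    coef α f k m < ∞ := by
  refine lt_of_le_of_lt (b := ENNReal.ofReal (3 * (((2 : ℝ) ^ k) ^ n)⁻¹) * ∫⁻ z, ‖f z‖ₑ) ?_
    (ENNReal.mul_lt_top ENNReal.ofReal_lt_top hf.hasFiniteIntegral)
  refine iSup₂_le (fun ψ hψ => ?_)
  refine (enorm_integral_le_lintegral_enorm _).trans ?_
  rw [← lintegral_const_mul' _ _ ENNReal.ofReal_ne_top]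
  refine lintegral_mono (fun z => ?_)
  rw [enorm_mul]
  gcongr
  rw [Real.enorm_eq_ofReal_abs]
  exact ENNReal.ofReal_le_ofReal (hψ.2.2.2 z)

/-- A single kernel realizes the supremum defining the coefficient up to a factor `2`; this
linearizes the coefficients for the `L²` estimate. -/
lemma exists_near_extremal {n : ℕ} {α : ℝ} {f : Rn n → ℝ} (hf : Integrable f) (k : ℤ)
    (m : Fin n → ℤ) : ∃ ψ ∈ Ker α k m, coef α f k m ≤ 2 * ‖∫ z, ψ z * f z‖ₑ := by
  by_cases h0 : coef α f k m = 0
  · exact ⟨_, zero_mem_Ker, by rw [h0]; exact zero_le⟩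
  have h1 : coef α f k m / 2 < coef α f k m :=
    ENNReal.half_lt_self h0 (coef_lt_top hf k m).ne
  conv_rhs at h1 => rw [coef]
  obtain ⟨ψ, h2⟩ := lt_iSup_iff.1 h1
  obtain ⟨hψ, h3⟩ := lt_iSup_iff.1 h2
  refine ⟨ψ, hψ, ?_⟩
  have := (ENNReal.div_le_iff_le_mul (by simp) (by simp)).1 h3.le
  rwa [mul_comm] at this

/-- The `L²` bound in terms of cubes: the squared coefficients, weighted by the volumes of the cubes,
sum to at most a multiple of `‖f‖₂²`. -/
lemma l2_coef {n : ℕ} {α : ℝ} (hα0 : 0 < α) (hα1 : α ≤ 1)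
    {f : Rn n → ℝ} (hf : Integrable f) (hf2 : Integrable (fun z => f z ^ 2)) :
    ∑' Q : ℤ × (Fin n → ℤ), ENNReal.ofReal (((2 : ℝ) ^ Q.1) ^ n) * coef α f Q.1 Q.2 ^ 2 ≤
      ENNReal.ofReal (4 * schurC n α * ∫ z, f z ^ 2) := by
  choose ψ hψ hψ2 using fun Q : ℤ × (Fin n → ℤ) => exists_near_extremal (α := α) hf Q.1 Q.2
  rw [ENNReal.tsum_eq_iSup_sum]
  refine iSup_le (fun F => ?_)
  calc ∑ Q ∈ F, ENNReal.ofReal (((2 : ℝ) ^ Q.1) ^ n) * coef α f Q.1 Q.2 ^ 2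
      ≤ ∑ Q ∈ F, ENNReal.ofReal (4 * (((2 : ℝ) ^ Q.1) ^ n * (∫ z, ψ Q z * f z) ^ 2)) := by
        refine Finset.sum_le_sum (fun Q _ => ?_)
        have h1 := pow_le_pow_left₀ zero_le (hψ2 Q) 2
        have h2 : (2 * ‖∫ z, ψ Q z * f z‖ₑ) ^ 2 =
            ENNReal.ofReal (4 * (∫ z, ψ Q z * f z) ^ 2) := by
          rw [Real.enorm_eq_ofReal_abs, mul_pow, ← ENNReal.ofReal_pow (abs_nonneg _), sq_abs,
            ENNReal.ofReal_mul (by norm_num)]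
          norm_num
        rw [h2] at h1
        calc _ ≤ ENNReal.ofReal (((2 : ℝ) ^ Q.1) ^ n) *
              ENNReal.ofReal (4 * (∫ z, ψ Q z * f z) ^ 2) := by gcongr
          _ = _ := by
              rw [← ENNReal.ofReal_mul (by positivity)]
              congr 1; ring
    _ = ENNReal.ofReal (4 * ∑ Q ∈ F, ((2 : ℝ) ^ Q.1) ^ n * (∫ z, ψ Q z * f z) ^ 2) := by
        rw [Finset.mul_sum, ENNReal.ofReal_sum_of_nonneg (fun _ _ => by positivity)]
    _ ≤ _ := by
        refine ENNReal.ofReal_le_ofReal ?_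
        have := l2_finset hα0 hα1 hψ hf hf2 F
        linarith

/-- Integrating a function of the dyadic label. -/
lemma lintegral_comp_idx {n : ℕ} (k : ℤ) (G : (Fin n → ℤ) → ℝ≥0∞) :
    ∫⁻ x : Rn n, G (idx k x) = ∑' m, ENNReal.ofReal (((2 : ℝ) ^ k) ^ n) * G m := by
  rw [← lintegral_map (f := G) (measurable_of_countable G) (measurable_idx k), lintegral_countable']
  refine tsum_congr (fun m => ?_)
  rw [Measure.map_apply (measurable_idx k) (measurableSet_singleton m), mul_comm]
  congr 1
  exact volume_cube k m

lemma measurable_comp_idx {n : ℕ} (k : ℤ) (G : (Fin n → ℤ) → ℝ≥0∞) :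
    Measurable (fun x : Rn n => G (idx k x)) :=
  (measurable_of_countable G).comp (measurable_idx k)

/-- The dyadic intrinsic square function is bounded on `L²`. -/
lemma lintegral_sqf_le {n : ℕ} {α : ℝ} (hα0 : 0 < α) (hα1 : α ≤ 1)
    {f : Rn n → ℝ} (hf : Integrable f) (hf2 : Integrable (fun z => f z ^ 2)) :
    ∫⁻ x, sqf α f x ≤ ENNReal.ofReal (4 * schurC n α * ∫ z, f z ^ 2) := by
  refine le_trans (le_of_eq ?_) (l2_coef hα0 hα1 hf hf2)
  unfold sqf
  rw [lintegral_tsum (fun k =>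
    (measurable_comp_idx k (fun m => coef α f k m ^ 2)).aemeasurable), ENNReal.tsum_prod']
  exact tsum_congr (fun k => lintegral_comp_idx k (fun m => coef α f k m ^ 2))

lemma measurable_sqf {n : ℕ} (α : ℝ) (f : Rn n → ℝ) : Measurable (sqf α f) := by
  unfold sqf
  exact Measurable.tsum (fun k => measurable_comp_idx k (fun m => coef α f k m ^ 2))

/-! ### Calderón–Zygmund decomposition -/

/-- The average of `|f|` over the dyadic cube `cube k m` exceeds `lam`. -/
def CZBig {n : ℕ} (f : Rn n → ℝ) (lam : ℝ) (k : ℤ) (m : Fin n → ℤ) : Prop :=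
  lam * ((2 : ℝ) ^ k) ^ n < ∫ z in cube k m, |f z|

/-- The maximal dyadic cubes over which the average of `|f|` exceeds `lam`. -/
def CZSel {n : ℕ} (f : Rn n → ℝ) (lam : ℝ) : Set (ℤ × (Fin n → ℤ)) :=
  {Q | CZBig f lam Q.1 Q.2 ∧ ∀ x ∈ cube Q.1 Q.2, ∀ l, Q.1 < l → ¬ CZBig f lam l (idx l x)}

section CZ
variable {n : ℕ} {f : Rn n → ℝ} {lam : ℝ}

/-- Maximality makes the selected cubes pairwise disjoint. -/
lemma CZSel_unique {Q Q' : ℤ × (Fin n → ℤ)} (hQ : Q ∈ CZSel f lam) (hQ' : Q' ∈ CZSel f lam)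
    {x : Rn n} (hx : x ∈ cube Q.1 Q.2) (hx' : x ∈ cube Q'.1 Q'.2) : Q = Q' := by
  have e : idx Q.1 x = Q.2 := hx
  have e' : idx Q'.1 x = Q'.2 := hx'
  rcases lt_trichotomy Q.1 Q'.1 with h | h | h
  · exact absurd (e' ▸ hQ'.1) (hQ.2 x hx _ h)
  · refine Prod.ext h ?_
    rw [← e, ← e', h]
  · exact absurd (e ▸ hQ.1) (hQ'.2 x hx' _ h)

lemma CZSel_disjoint : Pairwise (Function.onFun Disjoint
    (fun Q : CZSel f lam => cube Q.1.1 Q.1.2)) := by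
  intro Q Q' h
  refine Set.disjoint_left.2 (fun x hx hx' => h ?_)
  exact Subtype.ext (CZSel_unique Q.2 Q'.2 hx hx')

/-- Big cubes have bounded scale because the total mass of `f` is finite; hence every big cube
lies in a maximal one. -/
lemma CZ_scale_bdd (hn : 0 < n) (hl : 0 < lam) (hf : Integrable f) :
    ∃ b : ℤ, ∀ (l : ℤ) (m : Fin n → ℤ), CZBig f lam l m → l ≤ b := by
  obtain ⟨N, hN⟩ := pow_unbounded_of_one_lt ((∫ z, |f z|) / lam) (one_lt_two (α := ℝ))
  refine ⟨N, fun l m h => ?_⟩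
  by_contra! hlt
  have h1 : ∫ z in cube l m, |f z| ≤ ∫ z, |f z| :=
    setIntegral_le_integral hf.abs (Filter.Eventually.of_forall (fun z => abs_nonneg _))
  have h2 : (2 : ℝ) ^ N ≤ ((2 : ℝ) ^ l) ^ n := by
    have h3 : (2 : ℝ) ^ N ≤ (2 : ℝ) ^ l := by
      rw [← zpow_natCast]
      exact zpow_le_zpow_right₀ (by norm_num) hlt.le
    have h4 : (1 : ℝ) ≤ (2 : ℝ) ^ N := one_le_pow₀ (by norm_num)
    exact h3.trans (le_self_pow₀ (h4.trans h3) hn.ne')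
  rw [div_lt_iff₀ hl] at hN
  unfold CZBig at h
  nlinarith

/-- Every point of a big cube lies in a selected cube. -/
lemma exists_CZSel (hn : 0 < n) (hl : 0 < lam) (hf : Integrable f) {k : ℤ} {x : Rn n}
    (h : CZBig f lam k (idx k x)) : ∃ Q ∈ CZSel f lam, x ∈ cube Q.1 Q.2 := by
  obtain ⟨b, hb⟩ := CZ_scale_bdd hn hl hf
  obtain ⟨K, hK, hmax⟩ := Int.exists_greatest_of_bdd
    (P := fun l => CZBig f lam l (idx l x)) ⟨b, fun z hz => hb z _ hz⟩ ⟨k, h⟩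
  refine ⟨(K, idx K x), ⟨hK, fun y hy l hKl hbig => ?_⟩, rfl⟩
  have : idx l y = idx l x := idx_mono (k := K) (le_of_lt hKl) hy
  rw [this] at hbig
  exact absurd (hmax l hbig) (not_le.2 hKl)

/-- On a selected cube the average of `|f|` is at most `2 ^ n * lam`, by maximality applied to
the parent cube. -/
lemma CZSel_le (hl : 0 < lam) (hf : Integrable f) {Q : ℤ × (Fin n → ℤ)} (hQ : Q ∈ CZSel f lam) :
    ∫ z in cube Q.1 Q.2, |f z| ≤ 2 ^ n * lam * ((2 : ℝ) ^ Q.1) ^ n := by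
  have hne : (cube Q.1 Q.2 : Set (Rn n)).Nonempty := by
    by_contra! h
    have h1 := hQ.1
    unfold CZBig at h1
    rw [h] at h1
    simp only [Measure.restrict_empty, integral_zero_measure] at h1
    have := q_pos Q.1
    have h2 : 0 < lam * ((2 : ℝ) ^ Q.1) ^ n := by positivity
    linarith
  obtain ⟨x, hx⟩ := hne
  have h := hQ.2 x hx (Q.1 + 1) (by lia)
  unfold CZBig at h
  rw [not_lt] at h
  have hsub : (cube Q.1 Q.2 : Set (Rn n)) ⊆ cube (Q.1 + 1) (idx (Q.1 + 1) x) := by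
    intro y hy
    have e : idx Q.1 y = idx Q.1 x := Eq.trans hy (Eq.symm hx)
    exact idx_succ e
  have h2 : ∫ z in cube Q.1 Q.2, |f z| ≤ ∫ z in cube (Q.1 + 1) (idx (Q.1 + 1) x), |f z| :=
    setIntegral_mono_set hf.abs.integrableOn
      (Filter.Eventually.of_forall (fun z => abs_nonneg _)) hsub.eventuallyLE
  refine (h2.trans h).trans (le_of_eq ?_)
  rw [zpow_add_one₀ (by norm_num), mul_pow]
  ring

/-- The union of the selected cubes. -/
def CZU (f : Rn n → ℝ) (lam : ℝ) : Set (Rn n) := ⋃ Q : CZSel f lam, cube Q.1.1 Q.1.2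

lemma measurableSet_CZU : MeasurableSet (CZU f lam) :=
  MeasurableSet.iUnion (fun _ => measurableSet_cube _ _)

/-- Off the selected cubes `|f| ≤ lam` almost everywhere: all dyadic averages of `|f|` there are
at most `lam`, and Lebesgue's differentiation theorem applies to the dyadic cubes because they
fill a fixed proportion of a ball centred at any of their points. -/
lemma abs_le_of_notMem_CZU (hn : 0 < n) (hl : 0 < lam) (hf : Integrable f) :
    ∀ᵐ x, x ∉ CZU f lam → |f x| ≤ lam := by
  filter_upwards [IsUnifLocDoublingMeasure.ae_tendsto_average_norm_sub (volume : Measure (Rn n))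
    hf.locallyIntegrable 1] with x hx hxU
  set δ : ℕ → ℝ := fun j => (2 * n : ℝ) * (2 : ℝ) ^ (-(j : ℤ)) with hδ
  have hn' : (0 : ℝ) < n := by exact_mod_cast hn
  have hδpos : ∀ j, 0 < δ j := fun j => by
    have := q_pos (-(j : ℤ)); simp only [hδ]; positivity
  have hδ0 : Filter.Tendsto δ Filter.atTop (nhdsWithin 0 (Ioi 0)) := by
    refine tendsto_nhdsWithin_iff.2 ⟨?_, Filter.Eventually.of_forall (fun j => hδpos j)⟩
    have : Filter.Tendsto (fun j : ℕ => (2 * n : ℝ) * ((1 / 2 : ℝ) ^ j)) Filter.atTop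
        (nhds ((2 * n : ℝ) * 0)) :=
      (tendsto_pow_atTop_nhds_zero_of_lt_one (by norm_num) (by norm_num)).const_mul _
    rw [mul_zero] at this
    refine this.congr (fun j => ?_)
    simp [hδ, zpow_neg]
  have ht := hx (fun _ => x) δ hδ0 (Filter.Eventually.of_forall (fun j => by
    simp [(hδpos j).le]))
  have key : ∀ j : ℕ, |f x| ≤ lam +
      ((2 * n : ℝ) ^ n * vol1 n) * ⨍ y in closedBall x (δ j), ‖f y - f x‖ := by
    intro j
    set k : ℤ := -(j : ℤ)
    have hk := q_pos k
    set c : Set (Rn n) := cube k (idx k x)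
    have hsub : c ⊆ closedBall x (δ j) := by
      intro y hy
      have h1 := dist_corner' hy
      have h2 := dist_corner k x
      rw [mem_closedBall]
      have := dist_triangle_right y x (corner k (idx k x))
      simp only [hδ]
      linarith
    have hnb : ∫ z in c, |f z| ≤ lam * ((2 : ℝ) ^ k) ^ n := by
      by_contra! h
      obtain ⟨Q, hQ, hxQ⟩ := exists_CZSel hn hl hf h
      exact hxU (mem_iUnion.2 ⟨⟨Q, hQ⟩, hxQ⟩)
    have hvc : volume.real c = ((2 : ℝ) ^ k) ^ n := volume_real_cube k _
    have hcfin : volume c ≠ ⊤ := by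
      simp only [c, volume_cube]; exact ENNReal.ofReal_ne_top
    have i1 : IntegrableOn (fun y => ‖f y - f x‖) (closedBall x (δ j)) :=
      (hf.integrableOn.sub (integrableOn_const measure_closedBall_lt_top.ne)).norm
    have h1 : |f x| * ((2 : ℝ) ^ k) ^ n ≤
        (∫ z in c, |f z|) + ∫ y in closedBall x (δ j), ‖f y - f x‖ := by
      calc |f x| * ((2 : ℝ) ^ k) ^ n = ∫ z in c, |f x| := by
            rw [setIntegral_const, hvc, smul_eq_mul, mul_comm]
        _ ≤ ∫ z in c, (|f z| + ‖f z - f x‖) := by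
            refine integral_mono (integrableOn_const hcfin)
              (hf.abs.integrableOn.add (i1.mono_set hsub)) (fun z => ?_)
            have := abs_sub_abs_le_abs_sub (f x) (f z)
            rw [abs_sub_comm] at this
            simp only [Real.norm_eq_abs]
            linarith
        _ = (∫ z in c, |f z|) + ∫ z in c, ‖f z - f x‖ :=
            integral_add hf.abs.integrableOn (i1.mono_set hsub)
        _ ≤ _ := by
            refine add_le_add_right (setIntegral_mono_set i1
              (Filter.Eventually.of_forall (fun z => norm_nonneg _)) hsub.eventuallyLE) _
    rw [setAverage_eq, smul_eq_mul, volume_real_closedBall _ (hδpos j).le]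
    have hV : 0 < vol1 n := by
      unfold vol1
      exact ENNReal.toReal_pos (measure_ball_pos _ _ one_pos).ne' measure_ball_lt_top.ne
    have e : ((2 * n : ℝ) ^ n * vol1 n) * ((δ j ^ n * volume.real (ball (0 : Rn n) 1))⁻¹ *
        ∫ y in closedBall x (δ j), ‖f y - f x‖) =
        (((2 : ℝ) ^ k) ^ n)⁻¹ * ∫ y in closedBall x (δ j), ‖f y - f x‖ := by
      change _ * ((((2 * n : ℝ) * (2 : ℝ) ^ k) ^ n * vol1 n)⁻¹ * _) = _
      rw [mul_pow (2 * n : ℝ) ((2 : ℝ) ^ k)]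
      field_simp
    rw [e]
    have hkn : 0 < ((2 : ℝ) ^ k) ^ n := by positivity
    rw [← mul_le_mul_iff_left₀ hkn, add_mul]
    have e2 : (((2 : ℝ) ^ k) ^ n)⁻¹ * (∫ y in closedBall x (δ j), ‖f y - f x‖) *
        ((2 : ℝ) ^ k) ^ n = ∫ y in closedBall x (δ j), ‖f y - f x‖ := by
      field_simp
    rw [e2]
    linarith
  have hlim := (ht.const_mul ((2 * n : ℝ) ^ n * vol1 n)).const_add lam
  rw [mul_zero, add_zero] at hlim
  exact ge_of_tendsto' hlim key

end CZ

/-! ### Cancellation estimate for the bad part -/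

/-- The mean value of `f` over the dyadic cube `cube k m`. -/
def avg {n : ℕ} (f : Rn n → ℝ) (k : ℤ) (m : Fin n → ℤ) : ℝ :=
  (((2 : ℝ) ^ k) ^ n)⁻¹ * ∫ z in cube k m, f z

/-- The part of `f` on `cube k m` with its mean value removed. -/
def atom {n : ℕ} (f : Rn n → ℝ) (k : ℤ) (m : Fin n → ℤ) : Rn n → ℝ :=
  (cube k m).indicator (fun z => f z - avg f k m)

lemma volume_cube_ne_top {n : ℕ} (k : ℤ) (m : Fin n → ℤ) : volume (cube k m) ≠ ⊤ := by
  rw [volume_cube]; exact ENNReal.ofReal_ne_top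

section Atom
variable {n : ℕ} {f : Rn n → ℝ}

lemma integrable_atom (hf : Integrable f) (k : ℤ) (m : Fin n → ℤ) : Integrable (atom f k m) := by
  unfold atom
  rw [integrable_indicator_iff (measurableSet_cube k m)]
  exact hf.integrableOn.sub (integrableOn_const (volume_cube_ne_top k m))

lemma integral_atom (hf : Integrable f) (k : ℤ) (m : Fin n → ℤ) : ∫ z, atom f k m z = 0 := by
  unfold atom
  have := q_pos k
  rw [integral_indicator (measurableSet_cube k m),
    integral_sub hf.integrableOn (integrableOn_const (volume_cube_ne_top k m)),
    setIntegral_const, volume_real_cube, smul_eq_mul, avg]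
  field_simp
  simp

lemma enorm_avg_mul_le (k : ℤ) (m : Fin n → ℤ) :
    ‖avg f k m‖ₑ * volume (cube k m) ≤ ∫⁻ z in cube k m, ‖f z‖ₑ := by
  have hq : (0 : ℝ) < ((2 : ℝ) ^ k) ^ n := by positivity
  have : ‖avg f k m‖ₑ * volume (cube k m) = ‖∫ z in cube k m, f z‖ₑ := by
    rw [volume_cube, ← Real.enorm_eq_ofReal hq.le, ← enorm_mul, avg]
    congr 1
    field_simp
  rw [this]
  exact enorm_integral_le_lintegral_enorm _

lemma lintegral_atom_le (k : ℤ) (m : Fin n → ℤ) :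
    ∫⁻ z, ‖atom f k m z‖ₑ ≤ 2 * ∫⁻ z in cube k m, ‖f z‖ₑ := by
  have e : ∀ z, ‖atom f k m z‖ₑ = (cube k m).indicator (fun z => ‖f z - avg f k m‖ₑ) z := by
    intro z
    unfold atom
    rw [enorm_indicator_eq_indicator_enorm]
  simp_rw [e]
  rw [lintegral_indicator (measurableSet_cube k m)]
  calc ∫⁻ z in cube k m, ‖f z - avg f k m‖ₑ
      ≤ ∫⁻ z in cube k m, (‖f z‖ₑ + ‖avg f k m‖ₑ) := lintegral_mono (fun z => enorm_sub_le)
    _ = (∫⁻ z in cube k m, ‖f z‖ₑ) + ‖avg f k m‖ₑ * volume (cube k m) := by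
        rw [lintegral_add_right _ measurable_const, setLIntegral_const]
    _ ≤ _ := by
        rw [two_mul]
        gcongr
        exact enorm_avg_mul_le k m

end Atom

/-- The coefficients of a function `b` with vanishing integral supported in the cube
`cube K M`, at a point `x` away from this cube: they vanish at scales too small to reach the
cube, and otherwise the cancellation of `b` against the Hölder continuity of the kernels gives
geometric decay in the ratio of the scales. -/
lemma coef_far_le {n : ℕ} {α : ℝ} (hα0 : 0 < α) (hα1 : α ≤ 1) {b : Rn n → ℝ} (hb : Integrable b)
    {K : ℤ} {M : Fin n → ℤ} (hs : ∀ z, z ∉ cube K M → b z = 0) (h0 : ∫ z, b z = 0) {x : Rn n}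
    (hx : (3 * n + 2) * (2 : ℝ) ^ K < dist x (corner K M)) (k : ℤ) :
    coef α b k (idx k x) ≤ (closedBall (corner K M) ((3 * n + 2) * (2 : ℝ) ^ k)).indicator
      (fun _ => ENNReal.ofReal ((((2 : ℝ) ^ k) ^ n)⁻¹ * ((n + 1) * theta α ^ (k - K).natAbs)) *
        ∫⁻ z, ‖b z‖ₑ) x := by
  have hk := q_pos k
  have hK := q_pos K
  have hn : (0 : ℝ) ≤ n := by positivity
  refine iSup₂_le (fun ψ hψ => ?_)
  by_cases hxk : dist x (corner K M) ≤ (3 * n + 2) * (2 : ℝ) ^ k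
  · rw [indicator_of_mem (by exact hxk)]
    have hKk : K ≤ k := by
      by_contra! h
      have h1 : (2 : ℝ) ^ k ≤ 2 ^ K := zpow_le_zpow_right₀ (by norm_num) h.le
      have : (3 * n + 2) * (2 : ℝ) ^ k ≤ (3 * n + 2) * 2 ^ K := by gcongr
      linarith
    have e : ∫ z, ψ z * b z = ∫ z, (ψ z - ψ (corner K M)) * b z := by
      simp only [sub_mul]
      rw [integral_sub (Ker.integrable_mul hα0 hψ hb.locallyIntegrable) (hb.const_mul _),
        integral_const_mul, h0]
      simp
    rw [e]
    refine (enorm_integral_le_lintegral_enorm _).trans ?_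
    rw [← lintegral_const_mul' _ _ ENNReal.ofReal_ne_top]
    refine lintegral_mono (fun z => ?_)
    simp only
    by_cases hz : z ∈ cube K M
    · rw [enorm_mul]
      gcongr
      rw [Real.enorm_eq_ofReal_abs]
      refine ENNReal.ofReal_le_ofReal ((hψ.2.2.1 _ _).trans ?_)
      refine mul_le_mul_of_nonneg_left ?_ (by positivity)
      refine holder_ratio_le hα0 hα1 hKk (norm_nonneg _) (by linarith) ?_
      rw [← dist_eq_norm]
      have := dist_corner' hz
      linarith
    · rw [hs z hz]; simp
  · rw [indicator_of_notMem (by simpa using hxk)]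
    push Not at hxk
    have : ∀ z, ψ z * b z = 0 := by
      intro z
      by_cases hz : z ∈ cube K M
      · rw [hψ.1 z ?_, zero_mul]
        by_contra! h
        have h1 := dist_corner' hz
        have h2 := dist_corner k x
        have h3 := dist_triangle4 x (corner k (idx k x)) z (corner K M)
        rw [dist_comm (corner k (idx k x)) z] at h3
        rcases le_total K k with hKk | hKk
        · have h4 : (2 : ℝ) ^ K ≤ 2 ^ k := zpow_le_zpow_right₀ (by norm_num) hKk
          have : (n : ℝ) * (2 : ℝ) ^ K ≤ n * 2 ^ k := by gcongr
          linarith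
        · have h4 : (2 : ℝ) ^ k ≤ 2 ^ K := zpow_le_zpow_right₀ (by norm_num) hKk
          have : (2 * n + 2 : ℝ) * (2 : ℝ) ^ k ≤ (2 * n + 2) * 2 ^ K := by gcongr
          linarith
      · rw [hs z hz, mul_zero]
    simp [this]

/-- The constant in the integrated off-support estimate for an atom. -/
def farC (n : ℕ) (α : ℝ) : ℝ := (n + 1) * ((3 * n + 2) ^ n * vol1 n) * gsum (theta α)

lemma farC_nonneg (n : ℕ) (α : ℝ) : 0 ≤ farC n α := by
  have := vol1_nonneg n
  have := gsum_nonneg (theta_nonneg α)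
  unfold farC; positivity

/-- Off a dilate of its supporting cube, the `ℓ¹` sum of the coefficients of an atom is integrable
with norm controlled by the `L¹` norm of the atom. -/
lemma lintegral_far_le {n : ℕ} {α : ℝ} (hα0 : 0 < α) (hα1 : α ≤ 1) {b : Rn n → ℝ}
    (hb : Integrable b) {K : ℤ} {M : Fin n → ℤ} (hs : ∀ z, z ∉ cube K M → b z = 0)
    (h0 : ∫ z, b z = 0) :
    ∫⁻ x in (closedBall (corner K M) ((3 * n + 2) * (2 : ℝ) ^ K))ᶜ, ∑' k : ℤ,
      coef α b k (idx k x) ≤ ENNReal.ofReal (farC n α) * ∫⁻ z, ‖b z‖ₑ := by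
  rw [lintegral_tsum (fun k => (measurable_comp_idx k _).aemeasurable)]
  have hθ := theta_nonneg α
  have hV := vol1_nonneg n
  have key : ∀ k : ℤ, ∫⁻ x in (closedBall (corner K M) ((3 * n + 2) * (2 : ℝ) ^ K))ᶜ,
      coef α b k (idx k x) ≤ ENNReal.ofReal ((n + 1) * ((3 * n + 2) ^ n * vol1 n) *
        theta α ^ (k - K).natAbs) * ∫⁻ z, ‖b z‖ₑ := by
    intro k
    have hk := q_pos k
    calc ∫⁻ x in (closedBall (corner K M) ((3 * n + 2) * (2 : ℝ) ^ K))ᶜ, coef α b k (idx k x)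
        ≤ ∫⁻ x in (closedBall (corner K M) ((3 * n + 2) * (2 : ℝ) ^ K))ᶜ,
          (closedBall (corner K M) ((3 * n + 2) * (2 : ℝ) ^ k)).indicator
          (fun _ => ENNReal.ofReal ((((2 : ℝ) ^ k) ^ n)⁻¹ *
            ((n + 1) * theta α ^ (k - K).natAbs)) * ∫⁻ z, ‖b z‖ₑ) x := by
          refine setLIntegral_mono' isClosed_closedBall.measurableSet.compl (fun x hx => ?_)
          exact coef_far_le hα0 hα1 hb hs h0 (by simpa using hx) k
      _ ≤ ∫⁻ x, (closedBall (corner K M) ((3 * n + 2) * (2 : ℝ) ^ k)).indicator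
          (fun _ => ENNReal.ofReal ((((2 : ℝ) ^ k) ^ n)⁻¹ *
            ((n + 1) * theta α ^ (k - K).natAbs)) * ∫⁻ z, ‖b z‖ₑ) x :=
          setLIntegral_le_lintegral _ _
      _ = _ := by
          rw [lintegral_indicator_const isClosed_closedBall.measurableSet, mul_right_comm,
            ← ofReal_measureReal (h := measure_closedBall_lt_top.ne),
            volume_real_closedBall _ (by positivity), ← ENNReal.ofReal_mul (by positivity)]
          congr 2
          rw [mul_pow, vol1]
          field_simp
  refine (ENNReal.tsum_le_tsum key).trans (le_of_eq ?_)
  rw [ENNReal.tsum_mul_right, tsum_ofReal_geom hθ (theta_lt_one hα0) (by positivity)]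
  rfl

section Bad
variable {n : ℕ} {f : Rn n → ℝ} {lam : ℝ}

/-- The bad part of the Calderón–Zygmund decomposition. -/
def bad (f : Rn n → ℝ) (lam : ℝ) (x : Rn n) : ℝ :=
  ∑' Q : CZSel f lam, atom f Q.1.1 Q.1.2 x

lemma bad_of_mem (Q : CZSel f lam) {x : Rn n} (hx : x ∈ cube Q.1.1 Q.1.2) :
    bad f lam x = f x - avg f Q.1.1 Q.1.2 := by
  unfold bad
  rw [tsum_eq_single Q]
  · exact indicator_of_mem hx _
  · intro Q' hQ'
    refine indicator_of_notMem (fun hx' => hQ' ?_) _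
    exact Subtype.ext (CZSel_unique Q'.2 Q.2 hx' hx)

lemma bad_of_notMem {x : Rn n} (hx : x ∉ CZU f lam) : bad f lam x = 0 := by
  unfold bad
  have : ∀ Q : CZSel f lam, atom f Q.1.1 Q.1.2 x = 0 := fun Q =>
    indicator_of_notMem (fun h => hx (mem_iUnion.2 ⟨Q, h⟩)) _
  simp [this]

lemma tsum_lintegral_cube_le :
    ∑' Q : CZSel f lam, ∫⁻ z in cube Q.1.1 Q.1.2, ‖f z‖ₑ ≤ ∫⁻ z, ‖f z‖ₑ := by
  rw [← lintegral_iUnion (fun Q => measurableSet_cube _ _) CZSel_disjoint]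
  exact setLIntegral_le_lintegral _ _

lemma tsum_lintegral_atom_le :
    ∑' Q : CZSel f lam, ∫⁻ z, ‖atom f Q.1.1 Q.1.2 z‖ₑ ≤ 2 * ∫⁻ z, ‖f z‖ₑ := by
  calc ∑' Q : CZSel f lam, ∫⁻ z, ‖atom f Q.1.1 Q.1.2 z‖ₑ
      ≤ ∑' Q : CZSel f lam, 2 * ∫⁻ z in cube Q.1.1 Q.1.2, ‖f z‖ₑ :=
        ENNReal.tsum_le_tsum (fun Q => lintegral_atom_le Q.1.1 Q.1.2)
    _ = 2 * ∑' Q : CZSel f lam, ∫⁻ z in cube Q.1.1 Q.1.2, ‖f z‖ₑ := ENNReal.tsum_mul_left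
    _ ≤ 2 * ∫⁻ z, ‖f z‖ₑ := mul_le_mul_right tsum_lintegral_cube_le _

lemma lintegral_bad_le (hf : Integrable f) :
    ∫⁻ z, ‖bad f lam z‖ₑ ≤ 2 * ∫⁻ z, ‖f z‖ₑ := by
  refine le_trans ?_ (tsum_lintegral_atom_le (lam := lam))
  rw [← lintegral_tsum (fun Q => (integrable_atom hf _ _).aestronglyMeasurable.enorm)]
  exact lintegral_mono (fun z => enorm_tsum_le_tsum_enorm)

lemma integrable_bad (hf : Integrable f) : Integrable (bad f lam) := by
  refine ⟨AEMeasurable.aestronglyMeasurable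
    (AEMeasurable.tsum (fun Q => (integrable_atom hf _ _).aemeasurable)), ?_⟩
  exact (lintegral_bad_le hf).trans_lt (ENNReal.mul_lt_top (by simp) hf.2)

/-- The coefficients are countably subadditive along the decomposition of the bad part. -/
lemma coef_bad_le {α : ℝ} (hα0 : 0 < α) (hf : Integrable f) (k : ℤ) (m : Fin n → ℤ) :
    coef α (bad f lam) k m ≤ ∑' Q : CZSel f lam, coef α (atom f Q.1.1 Q.1.2) k m := by
  refine iSup₂_le (fun ψ hψ => ?_)
  have e : ∀ z, ψ z * bad f lam z = ∑' Q : CZSel f lam, ψ z * atom f Q.1.1 Q.1.2 z := by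
    intro z; unfold bad; rw [tsum_mul_left]
  simp_rw [e]
  rw [integral_tsum]
  · refine enorm_tsum_le_tsum_enorm.trans (ENNReal.tsum_le_tsum (fun Q => ?_))
    exact le_iSup₂ (f := fun ψ (_ : ψ ∈ Ker α k m) =>
      ‖∫ z, ψ z * atom f Q.1.1 Q.1.2 z‖ₑ) ψ hψ
  · exact fun Q => (Ker.integrable_mul hα0 hψ
      (integrable_atom hf _ _).locallyIntegrable).aestronglyMeasurable
  · have h1 : ∀ Q : CZSel f lam, ∫⁻ z, ‖ψ z * atom f Q.1.1 Q.1.2 z‖ₑ ≤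
        ENNReal.ofReal (3 * (((2 : ℝ) ^ k) ^ n)⁻¹) * ∫⁻ z, ‖atom f Q.1.1 Q.1.2 z‖ₑ := by
      intro Q
      rw [← lintegral_const_mul' _ _ ENNReal.ofReal_ne_top]
      refine lintegral_mono (fun z => ?_)
      simp only
      rw [enorm_mul]
      gcongr
      rw [Real.enorm_eq_ofReal_abs]
      exact ENNReal.ofReal_le_ofReal (hψ.2.2.2 z)
    refine ne_top_of_le_ne_top ?_ (ENNReal.tsum_le_tsum h1)
    rw [ENNReal.tsum_mul_left]
    refine ENNReal.mul_ne_top ENNReal.ofReal_ne_top (ne_top_of_le_ne_top ?_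
      (tsum_lintegral_atom_le))
    exact ENNReal.mul_ne_top (by simp) hf.2.ne

/-- The exceptional set: the union of the dilates of the selected cubes. -/
def CZE (f : Rn n → ℝ) (lam : ℝ) : Set (Rn n) :=
  ⋃ Q : CZSel f lam, closedBall (corner Q.1.1 Q.1.2) ((3 * n + 2) * (2 : ℝ) ^ Q.1.1)

lemma measurableSet_CZE : MeasurableSet (CZE f lam) :=
  MeasurableSet.iUnion (fun _ => isClosed_closedBall.measurableSet)

/-- Off the exceptional set the bad part is handled in `L¹`, atom by atom. -/
lemma lintegral_bad_far_le {α : ℝ} (hα0 : 0 < α) (hα1 : α ≤ 1) (hf : Integrable f) :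
    ∫⁻ x in (CZE f lam)ᶜ, ∑' k : ℤ, coef α (bad f lam) k (idx k x) ≤
      ENNReal.ofReal (farC n α) * (2 * ∫⁻ z, ‖f z‖ₑ) := by
  calc ∫⁻ x in (CZE f lam)ᶜ, ∑' k : ℤ, coef α (bad f lam) k (idx k x)
      ≤ ∫⁻ x in (CZE f lam)ᶜ, ∑' Q : CZSel f lam, ∑' k : ℤ,
          coef α (atom f Q.1.1 Q.1.2) k (idx k x) := by
        refine lintegral_mono (fun x => ?_)
        simp only
        rw [ENNReal.tsum_comm]
        exact ENNReal.tsum_le_tsum (fun k => coef_bad_le hα0 hf k _)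
    _ = ∑' Q : CZSel f lam, ∫⁻ x in (CZE f lam)ᶜ, ∑' k : ℤ,
          coef α (atom f Q.1.1 Q.1.2) k (idx k x) :=
        lintegral_tsum (fun Q => (Measurable.tsum
          (fun k => measurable_comp_idx k _)).aemeasurable)
    _ ≤ ∑' Q : CZSel f lam, ENNReal.ofReal (farC n α) * ∫⁻ z, ‖atom f Q.1.1 Q.1.2 z‖ₑ := by
        refine ENNReal.tsum_le_tsum (fun Q => ?_)
        refine le_trans (lintegral_mono_set ?_) (lintegral_far_le hα0 hα1
          (integrable_atom hf _ _) (K := Q.1.1) (M := Q.1.2)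
          (fun z hz => indicator_of_notMem hz _) (integral_atom hf _ _))
        exact compl_subset_compl.2 (subset_iUnion_of_subset Q subset_rfl)
    _ ≤ _ := by
        rw [ENNReal.tsum_mul_left]
        gcongr
        exact tsum_lintegral_atom_le

/-- The exceptional set has measure at most a multiple of `‖f‖₁ / lam`. -/
lemma volume_CZE_le (hl : 0 < lam) (hf : Integrable f) :
    ENNReal.ofReal lam * volume (CZE f lam) ≤
      ENNReal.ofReal ((3 * n + 2) ^ n * vol1 n) * ∫⁻ z, ‖f z‖ₑ := by
  have hV := vol1_nonneg n
  calc ENNReal.ofReal lam * volume (CZE f lam)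
      ≤ ENNReal.ofReal lam * ∑' Q : CZSel f lam,
        volume (closedBall (corner Q.1.1 Q.1.2) ((3 * n + 2) * (2 : ℝ) ^ Q.1.1)) := by
        gcongr
        exact measure_iUnion_le _
    _ = ∑' Q : CZSel f lam, ENNReal.ofReal lam *
        volume (closedBall (corner Q.1.1 Q.1.2) ((3 * n + 2) * (2 : ℝ) ^ Q.1.1)) :=
        ENNReal.tsum_mul_left.symm
    _ ≤ ∑' Q : CZSel f lam, ENNReal.ofReal ((3 * n + 2) ^ n * vol1 n) *
        ∫⁻ z in cube Q.1.1 Q.1.2, ‖f z‖ₑ := by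
        refine ENNReal.tsum_le_tsum (fun Q => ?_)
        have hq := q_pos Q.1.1
        have h1 : ∫⁻ z in cube Q.1.1 Q.1.2, ‖f z‖ₑ =
            ENNReal.ofReal (∫ z in cube Q.1.1 Q.1.2, |f z|) :=
          (ofReal_integral_norm_eq_lintegral_enorm hf.integrableOn).symm
        rw [h1, ← ofReal_measureReal (h := measure_closedBall_lt_top.ne),
          volume_real_closedBall _ (by positivity), ← ENNReal.ofReal_mul hl.le,
          ← ENNReal.ofReal_mul (by positivity)]
        refine ENNReal.ofReal_le_ofReal ?_
        have h2 : lam * ((2 : ℝ) ^ Q.1.1) ^ n ≤ ∫ z in cube Q.1.1 Q.1.2, |f z| := Q.2.1.le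
        have h3 := mul_le_mul_of_nonneg_left h2
          (show 0 ≤ (3 * n + 2 : ℝ) ^ n * vol1 n by positivity)
        refine le_trans (le_of_eq ?_) h3
        rw [mul_pow, vol1]
        ring
    _ ≤ _ := by
        rw [ENNReal.tsum_mul_left]
        gcongr
        exact tsum_lintegral_cube_le

end Bad

/-! ### The weak type (1,1) estimate -/

section Good
variable {n : ℕ} {f : Rn n → ℝ} {lam : ℝ}

/-- The good part of the Calderón–Zygmund decomposition. -/
def good (f : Rn n → ℝ) (lam : ℝ) (x : Rn n) : ℝ := f x - bad f lam x

lemma integrable_good (hf : Integrable f) : Integrable (good f lam) := hf.sub (integrable_bad hf)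

/-- The good part is bounded: off the selected cubes by Lebesgue differentiation, and on a selected
cube because it is the average of `f` there. -/
lemma abs_good_le (hn : 0 < n) (hl : 0 < lam) (hf : Integrable f) :
    ∀ᵐ x, |good f lam x| ≤ 2 ^ n * lam := by
  filter_upwards [abs_le_of_notMem_CZU hn hl hf] with x hx
  by_cases h : x ∈ CZU f lam
  · obtain ⟨Q, hQ⟩ := mem_iUnion.1 h
    have hq : (0 : ℝ) < ((2 : ℝ) ^ Q.1.1) ^ n := by positivity
    unfold good
    rw [bad_of_mem Q hQ, sub_sub_cancel, avg, abs_mul, abs_of_pos (inv_pos.2 hq),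
      inv_mul_le_iff₀ hq]
    refine (abs_integral_le_integral_abs).trans ((CZSel_le hl hf Q.2).trans (le_of_eq ?_))
    ring
  · unfold good
    rw [bad_of_notMem h, sub_zero]
    refine (hx h).trans ?_
    have : (1 : ℝ) ≤ 2 ^ n := one_le_pow₀ (by norm_num)
    nlinarith

lemma integral_good_le (hf : Integrable f) : ∫ z, |good f lam z| ≤ 3 * ∫ z, |f z| := by
  have h1 : ∫⁻ z, ‖good f lam z‖ₑ ≤ 3 * ∫⁻ z, ‖f z‖ₑ := by
    calc ∫⁻ z, ‖good f lam z‖ₑ ≤ ∫⁻ z, (‖f z‖ₑ + ‖bad f lam z‖ₑ) :=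
          lintegral_mono (fun z => enorm_sub_le)
      _ = (∫⁻ z, ‖f z‖ₑ) + ∫⁻ z, ‖bad f lam z‖ₑ :=
          lintegral_add_left' hf.aestronglyMeasurable.enorm _
      _ ≤ (∫⁻ z, ‖f z‖ₑ) + 2 * ∫⁻ z, ‖f z‖ₑ := by
          gcongr
          exact lintegral_bad_le hf
      _ = 3 * ∫⁻ z, ‖f z‖ₑ := by ring
  have h2 := ofReal_integral_norm_eq_lintegral_enorm (integrable_good (lam := lam) hf)
  have h3 := ofReal_integral_norm_eq_lintegral_enorm hf
  rw [← h2, ← h3] at h1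
  have h4 : (3 : ℝ≥0∞) = ENNReal.ofReal 3 := by norm_num
  rw [h4, ← ENNReal.ofReal_mul (by norm_num)] at h1
  exact (ENNReal.ofReal_le_ofReal_iff (mul_nonneg (by norm_num)
    (integral_nonneg (fun z => norm_nonneg _)))).1 h1

lemma integrable_good_sq (hn : 0 < n) (hl : 0 < lam) (hf : Integrable f) :
    Integrable (fun z => good f lam z ^ 2) := by
  have := (integrable_good (lam := lam) hf).bdd_mul (c := 2 ^ n * lam)
    (integrable_good (lam := lam) hf).aestronglyMeasurable (abs_good_le hn hl hf)
  refine this.congr (Filter.Eventually.of_forall (fun z => ?_))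
  simp only [sq]

lemma integral_good_sq_le (hn : 0 < n) (hl : 0 < lam) (hf : Integrable f) :
    ∫ z, good f lam z ^ 2 ≤ 2 ^ n * lam * (3 * ∫ z, |f z|) := by
  calc ∫ z, good f lam z ^ 2 ≤ ∫ z, 2 ^ n * lam * |good f lam z| := by
        refine integral_mono_ae (integrable_good_sq hn hl hf)
          ((integrable_good hf).abs.const_mul _) ?_
        filter_upwards [abs_good_le hn hl hf] with z hz
        rw [← sq_abs, sq]
        gcongr
    _ = 2 ^ n * lam * ∫ z, |good f lam z| := integral_const_mul _ _
    _ ≤ _ := by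
        gcongr
        exact integral_good_le hf

/-- The constant in the weak type (1,1) estimate. -/
def weakC (n : ℕ) (α : ℝ) : ℝ :=
  (3 * n + 2) ^ n * vol1 n + 48 * 2 ^ n * schurC n α + 4 * farC n α

lemma weakC_nonneg (n : ℕ) (α : ℝ) : 0 ≤ weakC n α := by
  have := vol1_nonneg n
  have := schurC_nonneg n α
  have := farC_nonneg n α
  unfold weakC; positivity

/-- The dyadic intrinsic square function is of weak type (1,1). -/
lemma weak_type {α : ℝ} (hn : 0 < n) (hα0 : 0 < α) (hα1 : α ≤ 1) (hl : 0 < lam)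
    (hf : Integrable f) :
    ENNReal.ofReal lam * volume {x | ENNReal.ofReal (lam ^ 2) < sqf α f x} ≤
      ENNReal.ofReal (weakC n α * ∫ z, |f z|) := by
  have hV := vol1_nonneg n
  have hS := schurC_nonneg n α
  have hF := farC_nonneg n α
  have hI : 0 ≤ ∫ z, |f z| := integral_nonneg (fun z => abs_nonneg _)
  have hfn : ∫⁻ z, ‖f z‖ₑ = ENNReal.ofReal (∫ z, |f z|) :=
    (ofReal_integral_norm_eq_lintegral_enorm hf).symm
  set S : Rn n → ℝ≥0∞ := fun x => ∑' k : ℤ, coef α (bad f lam) k (idx k x) with hSdef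
  set G : Set (Rn n) := {x | ENNReal.ofReal (lam ^ 2 / 4) ≤ sqf α (good f lam) x}
  set B : Set (Rn n) := {x | ENNReal.ofReal (lam / 2) ≤ S x}
  have hsub : {x | ENNReal.ofReal (lam ^ 2) < sqf α f x} ⊆
      CZE f lam ∪ G ∪ (B ∩ (CZE f lam)ᶜ) := by
    intro x hx
    by_contra h
    simp only [mem_union, mem_inter_iff, mem_compl_iff, not_or, not_and, not_not] at h
    obtain ⟨⟨hE, hG⟩, hB⟩ := h
    have hB' : x ∉ B := fun h => hE (hB h)
    have hG' : sqf α (good f lam) x < ENNReal.ofReal (lam ^ 2 / 4) := not_le.1 hG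
    have hB'' : S x < ENNReal.ofReal (lam / 2) := not_le.1 hB'
    have e : f = good f lam + bad f lam := by
      funext z; simp [good]
    have h1 : sqf α f x ≤ 2 * sqf α (good f lam) x + 2 * sqf α (bad f lam) x := by
      conv_lhs => rw [e]
      exact sqf_add_le hα0 (integrable_good hf).locallyIntegrable
        (integrable_bad hf).locallyIntegrable x
    have h2 : sqf α (bad f lam) x ≤ ENNReal.ofReal (lam ^ 2 / 4) := by
      refine (sqf_le_tsum_sq α _ x).trans ?_
      calc S x ^ 2 ≤ ENNReal.ofReal (lam / 2) ^ 2 := by gcongr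
        _ = ENNReal.ofReal (lam ^ 2 / 4) := by
            rw [← ENNReal.ofReal_pow (by positivity)]
            congr 1; ring
    have h3 : 2 * sqf α (good f lam) x + 2 * sqf α (bad f lam) x ≤ ENNReal.ofReal (lam ^ 2) := by
      calc _ ≤ 2 * ENNReal.ofReal (lam ^ 2 / 4) + 2 * ENNReal.ofReal (lam ^ 2 / 4) := by gcongr
        _ = ENNReal.ofReal (lam ^ 2) := by
            have : (2 : ℝ≥0∞) = ENNReal.ofReal 2 := by norm_num
            rw [this, ← ENNReal.ofReal_mul (by norm_num),
              ← ENNReal.ofReal_add (by positivity) (by positivity)]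
            congr 1; ring
    exact absurd hx (not_lt.2 (h1.trans h3))
  have hE : ENNReal.ofReal lam * volume (CZE f lam) ≤
      ENNReal.ofReal ((3 * n + 2) ^ n * vol1 n * ∫ z, |f z|) := by
    refine (volume_CZE_le hl hf).trans (le_of_eq ?_)
    rw [hfn, ← ENNReal.ofReal_mul (by positivity)]
  have hGv : ENNReal.ofReal lam * volume G ≤
      ENNReal.ofReal (48 * 2 ^ n * schurC n α * ∫ z, |f z|) := by
    have h1 : ENNReal.ofReal (lam ^ 2 / 4) * volume G ≤
        ENNReal.ofReal (4 * schurC n α * ∫ z, good f lam z ^ 2) :=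
      (mul_meas_ge_le_lintegral (μ := volume) (measurable_sqf α (good f lam))
      (ENNReal.ofReal (lam ^ 2 / 4))).trans
      (lintegral_sqf_le hα0 hα1 (integrable_good hf) (integrable_good_sq hn hl hf))
    have h2 := integral_good_sq_le hn hl hf
    have h3 : 4 * schurC n α * ∫ z, good f lam z ^ 2 ≤
        lam / 4 * (48 * 2 ^ n * schurC n α * ∫ z, |f z|) := by
      calc _ ≤ 4 * schurC n α * (2 ^ n * lam * (3 * ∫ z, |f z|)) := by gcongr
        _ = _ := by ring
    have h4 := h1.trans (ENNReal.ofReal_le_ofReal h3)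
    have e : lam ^ 2 / 4 = lam / 4 * lam := by ring
    rw [e, ENNReal.ofReal_mul (by positivity), ENNReal.ofReal_mul (p := lam / 4) (by positivity),
      mul_assoc] at h4
    exact (ENNReal.mul_le_mul_iff_right
      (ENNReal.ofReal_pos.2 (show 0 < lam / 4 by positivity)).ne' ENNReal.ofReal_ne_top).1 h4
  have hBv : ENNReal.ofReal lam * volume (B ∩ (CZE f lam)ᶜ) ≤
      ENNReal.ofReal (4 * farC n α * ∫ z, |f z|) := by
    have hSm : Measurable S := Measurable.tsum (fun k => measurable_comp_idx k _)
    have h1 := (mul_meas_ge_le_lintegral (μ := volume.restrict (CZE f lam)ᶜ) hSm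
      (ENNReal.ofReal (lam / 2))).trans (lintegral_bad_far_le hα0 hα1 hf)
    rw [Measure.restrict_apply (measurableSet_le measurable_const hSm)] at h1
    have e : ENNReal.ofReal lam = 2 * ENNReal.ofReal (lam / 2) := by
      have : (2 : ℝ≥0∞) = ENNReal.ofReal 2 := by norm_num
      rw [this, ← ENNReal.ofReal_mul (by norm_num)]
      congr 1; ring
    rw [e, mul_assoc]
    refine (mul_le_mul_right h1 2).trans (le_of_eq ?_)
    have : (2 : ℝ≥0∞) = ENNReal.ofReal 2 := by norm_num
    rw [hfn]
    generalize (∫ z, |f z|) = I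
    rw [this, ← ENNReal.ofReal_mul (by norm_num), ← ENNReal.ofReal_mul hF,
      ← ENNReal.ofReal_mul (by norm_num)]
    congr 1; ring
  calc ENNReal.ofReal lam * volume {x | ENNReal.ofReal (lam ^ 2) < sqf α f x}
      ≤ ENNReal.ofReal lam * (volume (CZE f lam) + volume G + volume (B ∩ (CZE f lam)ᶜ)) := by
        gcongr
        exact (measure_mono hsub).trans ((measure_union_le _ _).trans
          (add_le_add_left (measure_union_le _ _) _))
    _ = ENNReal.ofReal lam * volume (CZE f lam) + ENNReal.ofReal lam * volume G +
        ENNReal.ofReal lam * volume (B ∩ (CZE f lam)ᶜ) := by ring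
    _ ≤ _ := add_le_add (add_le_add hE hGv) hBv
    _ = _ := by
        rw [← ENNReal.ofReal_add (by positivity) (by positivity),
          ← ENNReal.ofReal_add (by positivity) (by positivity)]
        congr 1
        unfold weakC; ring

end Good

/-! ### Localization in Morrey spaces -/

section Far
variable {n : ℕ} {α : ℝ} {f : Rn n → ℝ}

/-- The coefficients, at points of `ball x₀ r`, of the part of `f` outside `ball x₀ (2 * r)`:
a scale contributes only if its kernels reach from one ball to the complement of the other. -/
lemma coef_outer_le (hf : LocallyIntegrable f volume) {Φ : ℝ → ℝ} {A : ℝ}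
    (hM : MorreyBound 1 Φ f A) {x₀ x : Rn n} {r : ℝ} (hx : x ∈ ball x₀ r) (k : ℤ) :
    coef α ((ball x₀ (2 * r))ᶜ.indicator f) k (idx k x) ≤
      if r ≤ (2 * n + 2) * (2 : ℝ) ^ k then
        ENNReal.ofReal (3 * (((2 : ℝ) ^ k) ^ n)⁻¹ * (A * Φ ((4 * n + 4) * (2 : ℝ) ^ k)))
      else 0 := by
  have hk := q_pos k
  rw [mem_ball] at hx
  refine iSup₂_le (fun ψ hψ => ?_)
  have hsupp : ∀ z, ψ z ≠ 0 → dist z x ≤ (2 * n + 2) * (2 : ℝ) ^ k := by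
    intro z hz
    have h1 : dist z (corner k (idx k x)) ≤ (n + 2) * (2 : ℝ) ^ k := by
      by_contra! h
      exact hz (hψ.1 z h)
    have h2 := dist_corner k x
    have h3 := dist_triangle_right z x (corner k (idx k x))
    linarith
  split_ifs with hr
  · set b : Set (Rn n) := ball x₀ ((4 * n + 4) * (2 : ℝ) ^ k)
    have hfb : IntegrableOn f b := (hf.integrableOn_isCompact
      (isCompact_closedBall x₀ ((4 * n + 4) * (2 : ℝ) ^ k))).mono_set ball_subset_closedBall
    have hzero : ∀ z, z ∉ b → ψ z * (ball x₀ (2 * r))ᶜ.indicator f z = 0 := by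
      intro z hz
      by_cases h : ψ z = 0
      · rw [h, zero_mul]
      · exfalso
        refine hz ?_
        rw [mem_ball]
        have := hsupp z h
        have := dist_triangle z x x₀
        linarith
    have hMb := hM x₀ ((4 * n + 4) * (2 : ℝ) ^ k) (by positivity)
    simp only [Real.rpow_one] at hMb
    rw [← setIntegral_eq_integral_of_forall_compl_eq_zero hzero, Real.enorm_eq_ofReal_abs]
    refine ENNReal.ofReal_le_ofReal ?_
    calc |∫ z in b, ψ z * (ball x₀ (2 * r))ᶜ.indicator f z|
        ≤ ∫ z in b, 3 * (((2 : ℝ) ^ k) ^ n)⁻¹ * |f z| := by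
          rw [← Real.norm_eq_abs]
          refine norm_integral_le_of_norm_le (hfb.abs.const_mul _)
            (Filter.Eventually.of_forall (fun z => ?_))
          rw [Real.norm_eq_abs, abs_mul]
          refine mul_le_mul (hψ.2.2.2 z) ?_ (abs_nonneg _) (by positivity)
          have := norm_indicator_le_norm_self (s := (ball x₀ (2 * r))ᶜ) f z
          simpa [Real.norm_eq_abs] using this
      _ = 3 * (((2 : ℝ) ^ k) ^ n)⁻¹ * ∫ z in b, |f z| := integral_const_mul _ _
      _ ≤ _ := by gcongr
  · have : ∀ z, ψ z * (ball x₀ (2 * r))ᶜ.indicator f z = 0 := by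
      intro z
      by_cases h : ψ z = 0
      · rw [h, zero_mul]
      · rw [indicator_of_notMem, mul_zero]
        rw [notMem_compl_iff, mem_ball]
        have := hsupp z h
        have := dist_triangle z x x₀
        linarith
    simp [this]

lemma doubling_pow {Φ : ℝ → ℝ} {D : ℝ} (hD1 : 1 ≤ D)
    (hΦdoub : ∀ r : ℝ, 0 < r → Φ (2 * r) ≤ D * Φ r) {r : ℝ} (hr : 0 < r) (j : ℕ) :
    Φ (2 ^ j * r) ≤ D ^ j * Φ r := by
  induction j with
  | zero => simp
  | succ j ih =>
    calc Φ (2 ^ (j + 1) * r) = Φ (2 * (2 ^ j * r)) := by congr 1; ring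
      _ ≤ D * Φ (2 ^ j * r) := hΦdoub _ (by positivity)
      _ ≤ D * (D ^ j * Φ r) := by gcongr
      _ = _ := by ring

/-- The constant in the estimate for the outer part. -/
def outerC (n : ℕ) (D : ℝ) : ℝ := 3 * D ^ 2 * (2 * n + 2) ^ n * gsum (D / 2 ^ n)

/-- The outer part is estimated pointwise: the scale `2 ^ j * r` contributes at most a multiple
of `A * Φ (2 ^ j * r) / (2 ^ j * r) ^ n`, and these terms decay geometrically because the
doubling constant is smaller than `2 ^ n`. -/
lemma tsum_coef_outer_le (hf : LocallyIntegrable f volume) {Φ : ℝ → ℝ} {A D : ℝ} (hA : 0 ≤ A)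
    (hΦpos : ∀ r : ℝ, 0 < r → 0 < Φ r) (hΦmono : ∀ r s : ℝ, 0 < r → r ≤ s → Φ r ≤ Φ s)
    (hD1 : 1 ≤ D) (hD2 : D < 2 ^ n)
    (hΦdoub : ∀ r : ℝ, 0 < r → Φ (2 * r) ≤ D * Φ r)
    (hM : MorreyBound 1 Φ f A) {x₀ x : Rn n} {r : ℝ} (hr : 0 < r) (hx : x ∈ ball x₀ r) :
    ∑' k : ℤ, coef α ((ball x₀ (2 * r))ᶜ.indicator f) k (idx k x) ≤
      ENNReal.ofReal (outerC n D * (A * Φ r / r ^ n)) := by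
  have hN : (0 : ℝ) < 2 * n + 2 := by positivity
  have hΦr := hΦpos r hr
  obtain ⟨k₁, hk1, hk2⟩ := exists_mem_Ioc_zpow (div_pos hr hN) (one_lt_two (α := ℝ))
  have hk₁ := q_pos k₁
  rw [lt_div_iff₀ hN] at hk1
  rw [div_le_iff₀ hN] at hk2
  set c : ℝ := 3 * D ^ 2 * (2 * n + 2) ^ n * (A * Φ r / r ^ n) with hc
  have hc0 : 0 ≤ c := by positivity
  have hρ1 : D / 2 ^ n < 1 := (div_lt_one (by positivity)).2 hD2
  have key : ∀ k : ℤ, coef α ((ball x₀ (2 * r))ᶜ.indicator f) k (idx k x) ≤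
      ENNReal.ofReal (c * (D / 2 ^ n) ^ (k - (k₁ + 1)).natAbs) := by
    intro k
    refine (coef_outer_le hf hM hx k).trans ?_
    split_ifs with h
    · have hkk : k₁ < k := by
        by_contra! hle
        have h1 : (2 : ℝ) ^ k ≤ 2 ^ k₁ := zpow_le_zpow_right₀ (by norm_num) hle
        have h2 : (2 * n + 2) * (2 : ℝ) ^ k ≤ (2 * n + 2) * 2 ^ k₁ := by gcongr
        linarith
      obtain ⟨j, hj⟩ := Int.le.dest (show k₁ + 1 ≤ k by lia)
      have hkj : (k - (k₁ + 1)).natAbs = j := by lia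
      have hq : (2 : ℝ) ^ k = 2 ^ j * 2 ^ (k₁ + 1) := by
        rw [← hj, zpow_add₀ (by norm_num), zpow_natCast, mul_comm]
      rw [hkj]
      refine ENNReal.ofReal_le_ofReal ?_
      have hΦk : Φ ((4 * n + 4) * (2 : ℝ) ^ k) ≤ D ^ (j + 2) * Φ r := by
        refine (hΦmono _ (2 ^ (j + 2) * r) (by positivity) ?_).trans
          (doubling_pow hD1 hΦdoub hr _)
        rw [hq, zpow_add_one₀ (by norm_num)]
        calc (4 * n + 4) * (2 ^ j * ((2 : ℝ) ^ k₁ * 2)) =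
            2 ^ (j + 2) * (2 ^ k₁ * (2 * n + 2)) := by ring
          _ ≤ _ := by gcongr
      have hqn : (((2 : ℝ) ^ k) ^ n)⁻¹ ≤ (2 * n + 2) ^ n / r ^ n * ((2 ^ n) ^ j)⁻¹ := by
        have h1 : 2 ^ j * (r / (2 * n + 2)) ≤ (2 : ℝ) ^ k := by
          rw [hq]
          gcongr
          rwa [div_le_iff₀ hN]
        have h2 : (2 ^ j * (r / (2 * n + 2))) ^ n ≤ ((2 : ℝ) ^ k) ^ n := by gcongr
        refine (inv_anti₀ (by positivity) h2).trans (le_of_eq ?_)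
        rw [mul_pow, div_pow, ← pow_mul, ← pow_mul, mul_comm j n]
        field_simp
      calc 3 * (((2 : ℝ) ^ k) ^ n)⁻¹ * (A * Φ ((4 * n + 4) * (2 : ℝ) ^ k))
          ≤ 3 * ((2 * n + 2) ^ n / r ^ n * ((2 ^ n) ^ j)⁻¹) * (A * (D ^ (j + 2) * Φ r)) := by
            have := (hΦpos ((4 * n + 4) * (2 : ℝ) ^ k) (by positivity)).le
            gcongr
        _ = c * (D / 2 ^ n) ^ j := by
            rw [hc, div_pow, pow_add]
            field_simp
    · exact zero_le
  refine (ENNReal.tsum_le_tsum key).trans (le_of_eq ?_)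
  rw [tsum_ofReal_geom (by positivity) hρ1 hc0]
  congr 1
  rw [hc, outerC]
  ring

end Far

/-! ### The Morrey estimate -/

/-- **Corollary 1.8.** Let `0 < α ≤ 1` and `p = 1`.  If `Φ` is positive increasing on
`(0,∞)` and doubling with constant `1 ≤ D < 2ⁿ`, then `g_α` is bounded from `L^{1,Φ}(ℝⁿ)`
to `WL^{1,Φ}(ℝⁿ)`. -/
theorem galpha_weak_morrey_bounded
    (n : ℕ) (hn : 0 < n) (α D : ℝ) (hα0 : 0 < α) (hα1 : α ≤ 1)
    (Φ : ℝ → ℝ) (hΦpos : ∀ r : ℝ, 0 < r → 0 < Φ r)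
    (hΦmono : ∀ r s : ℝ, 0 < r → r ≤ s → Φ r ≤ Φ s)
    (hD1 : 1 ≤ D) (hD2 : D < 2 ^ n)
    (hΦdoub : ∀ r : ℝ, 0 < r → Φ (2 * r) ≤ D * Φ r) :
    ∃ C : ℝ, 0 < C ∧ ∀ f : Rn n → ℝ, LocallyIntegrable f volume →
      ∀ A : ℝ, 0 ≤ A → MorreyBound 1 Φ f A →
        WeakMorreyBound Φ (gAlpha α f) (C * A) := by
  have hV := vol1_nonneg n
  have hW := weakC_nonneg n α
  have hg : 0 ≤ gsum (D / 2 ^ n) := gsum_nonneg (by positivity)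
  have hO : 0 ≤ outerC n D := by unfold outerC; positivity
  refine ⟨3 * weakC n α * D + 3 * outerC n D * vol1 n + 1, by positivity, ?_⟩
  intro f hf A hA hM x₀ r hr σ hσ
  have hΦr := hΦpos r hr
  have hAΦ : 0 ≤ A * Φ r := by positivity
  set f₁ : Rn n → ℝ := (ball x₀ (2 * r)).indicator f with hf₁
  set f₂ : Rn n → ℝ := (ball x₀ (2 * r))ᶜ.indicator f with hf₂
  have hfb : IntegrableOn f (ball x₀ (2 * r)) :=
    (hf.integrableOn_isCompact (isCompact_closedBall x₀ (2 * r))).mono_set ball_subset_closedBall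
  have i₁ : Integrable f₁ := (integrable_indicator_iff measurableSet_ball).2 hfb
  have i₂ : LocallyIntegrable f₂ volume := hf.indicator measurableSet_ball.compl
  have hf12 : f = f₁ + f₂ := (indicator_self_add_compl _ _).symm
  have hnorm : ∫ z, |f₁ z| ≤ A * (D * Φ r) := by
    have h1 : ∫ z, |f₁ z| = ∫ z in ball x₀ (2 * r), |f z| := by
      rw [← integral_indicator measurableSet_ball]
      congr 1
      funext z
      by_cases hz : z ∈ ball x₀ (2 * r) <;> simp [hf₁, hz]
    have h2 := hM x₀ (2 * r) (by positivity)
    simp only [Real.rpow_one] at h2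
    rw [h1]
    refine h2.trans ?_
    gcongr
    exact hΦdoub r hr
  have hball : volume (ball x₀ r) = ENNReal.ofReal (r ^ n * vol1 n) := by
    rw [Measure.addHaar_ball_of_pos _ _ hr, finrank_euclideanSpace_fin,
      ENNReal.ofReal_mul (by positivity), vol1, ofReal_measureReal measure_ball_lt_top.ne]
  set B : ℝ := outerC n D * (A * Φ r / r ^ n) with hB
  have hB0 : 0 ≤ B := by positivity
  have goal_of : ∀ c : ℝ, 0 ≤ c → ENNReal.ofReal σ * volume {x ∈ ball x₀ r | σ < gAlpha α f x} ≤
      ENNReal.ofReal c → σ * (volume {x ∈ ball x₀ r | σ < gAlpha α f x}).toReal ≤ c := by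
    intro c hc h
    have := ENNReal.toReal_mono ENNReal.ofReal_ne_top h
    rwa [ENNReal.toReal_mul, ENNReal.toReal_ofReal hσ.le, ENNReal.toReal_ofReal hc] at this
  have hc0 : 0 ≤ (3 * weakC n α * D + 3 * outerC n D * vol1 n + 1) * A * Φ r := by positivity
  refine goal_of _ hc0 ?_
  -- If `σ` is below the pointwise bound for the outer part, the volume of the ball suffices;
  -- otherwise the level set is controlled by the local part alone.
  by_cases hσB : σ < 3 * B
  · calc ENNReal.ofReal σ * volume {x ∈ ball x₀ r | σ < gAlpha α f x}
        ≤ ENNReal.ofReal (3 * B) * volume (ball x₀ r) := by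
          gcongr
          exact fun x hx => hx.1
      _ = ENNReal.ofReal (3 * outerC n D * vol1 n * (A * Φ r)) := by
          rw [hball, ← ENNReal.ofReal_mul (by positivity)]
          congr 1
          rw [hB]
          field_simp
      _ ≤ _ := by
          refine ENNReal.ofReal_le_ofReal ?_
          have : 0 ≤ (3 * weakC n α * D + 1) * (A * Φ r) := by positivity
          linarith
  · push Not at hσB
    have hsub : {x ∈ ball x₀ r | σ < gAlpha α f x} ⊆
        {x | ENNReal.ofReal ((σ / 3) ^ 2) < sqf α f₁ x} := by
      rintro x ⟨hx, hgx⟩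
      by_contra hle
      have hle' : sqf α f₁ x ≤ ENNReal.ofReal ((σ / 3) ^ 2) := not_lt.1 hle
      have h2 : sqf α f₂ x ≤ ENNReal.ofReal ((σ / 3) ^ 2) := by
        have h3 := tsum_coef_outer_le (α := α) hf hA hΦpos hΦmono hD1 hD2 hΦdoub hM hr hx
        rw [ENNReal.ofReal_pow (by positivity : (0 : ℝ) ≤ σ / 3)]
        refine (sqf_le_tsum_sq α f₂ x).trans ?_
        have h4 := h3.trans (ENNReal.ofReal_le_ofReal (show B ≤ σ / 3 by linarith))
        gcongr
      have h5 := lt_sqf_of_lt_gAlpha hn hα0 hα1 f x hσ hgx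
      have h6 : sqf α f x ≤ 2 * sqf α f₁ x + 2 * sqf α f₂ x := by
        conv_lhs => rw [hf12]
        exact sqf_add_le hα0 i₁.locallyIntegrable i₂ x
      have h7 : 2 * sqf α f₁ x + 2 * sqf α f₂ x ≤ ENNReal.ofReal (σ ^ 2) := by
        calc _ ≤ 2 * ENNReal.ofReal ((σ / 3) ^ 2) + 2 * ENNReal.ofReal ((σ / 3) ^ 2) := by gcongr
          _ = ENNReal.ofReal (4 / 9 * σ ^ 2) := by
              have : (2 : ℝ≥0∞) = ENNReal.ofReal 2 := by norm_num
              rw [this, ← ENNReal.ofReal_mul (by norm_num),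
                ← ENNReal.ofReal_add (by positivity) (by positivity)]
              congr 1; ring
          _ ≤ _ := ENNReal.ofReal_le_ofReal (by nlinarith [sq_nonneg σ])
      exact absurd h5 (not_lt.2 (h6.trans h7))
    have hw := weak_type (f := f₁) (lam := σ / 3) hn hα0 hα1 (by positivity) i₁
    calc ENNReal.ofReal σ * volume {x ∈ ball x₀ r | σ < gAlpha α f x}
        = ENNReal.ofReal 3 * (ENNReal.ofReal (σ / 3) *
            volume {x ∈ ball x₀ r | σ < gAlpha α f x}) := by
          rw [← mul_assoc, ← ENNReal.ofReal_mul (by norm_num)]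
          congr 2
          ring
      _ ≤ ENNReal.ofReal 3 * ENNReal.ofReal (weakC n α * ∫ z, |f₁ z|) := by
          gcongr
          exact (mul_le_mul_right (measure_mono hsub) _).trans hw
      _ = ENNReal.ofReal (3 * (weakC n α * ∫ z, |f₁ z|)) :=
          (ENNReal.ofReal_mul (by norm_num)).symm
      _ ≤ _ := by
          refine ENNReal.ofReal_le_ofReal ?_
          have h1 : weakC n α * ∫ z, |f₁ z| ≤ weakC n α * (A * (D * Φ r)) := by gcongr
          have h2 : 0 ≤ (3 * outerC n D * vol1 n + 1) * (A * Φ r) := by positivity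
          linarith
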